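/- For every p < 1/2 and every r ∈ [0,1], the DaC measure ℙ_{p,r} is ergodic with respect to translations: it is invariant under the translations T_{(1,0)} and T_{(0,1)}, and each of these two translations is an ergodic measure-preserving transformation of (the configuration space equipped with) ℙ_{p,r}, i.e. every measurable event invariant under T_{(1,0)} (respectively T_{(0,1)}) has ℙ_{p,r}-probability 0 or 1. -/

import Mathlib

/-!
Common definitions for the Divide-and-Colour (DaC) model of
Bálint, Camia and Meester, "Sharp phase transition and critical
behaviour in 2D divide and colour models".

The model is built concretely: a single uniform random variable on `(0,1]`
is decomposed into countably many i.i.d. uniform random variables (via its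
binary digits); one family of uniforms drives the Bernoulli(p) bond
percolation (the edge configuration), and an independent family of uniforms
attaches an independent Bernoulli(r) colour to each bond cluster (the colour
of a cluster is determined by the uniform label of its canonical
representative, the vertex of minimal encoding).  The DaC measure
`ℙ_{p,r}` is the pushforward of Lebesgue measure on `(0,1]` under the map
producing the pair (edge configuration, colour configuration).
-/

open MeasureTheory ENNReal

namespace DaC

/-- Vertices of the lattice. -/
abbrev V : Type := ℤ × ℤ

/-- Square lattice adjacency: Euclidean distance `1`. -/
def SqAdj (u v : V) : Prop := (u.1 - v.1) ^ 2 + (u.2 - v.2) ^ 2 = 1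

/-- `*`-adjacency (matching graph of the square lattice):
Euclidean distance `1` or `√2`. -/
def StarAdj (u v : V) : Prop :=
  (u.1 - v.1) ^ 2 + (u.2 - v.2) ^ 2 = 1 ∨ (u.1 - v.1) ^ 2 + (u.2 - v.2) ^ 2 = 2

/-- Triangular lattice adjacency. -/
def TriAdj (u v : V) : Prop :=
  (u.1 - v.1, u.2 - v.2) ∈
    ({(1, 0), (-1, 0), (0, 1), (0, -1), (1, 1), (-1, -1)} : Set (ℤ × ℤ))

/-- Classical indicator of a proposition, as a boolean. -/
noncomputable def boolOf (P : Prop) : Bool := @decide P (Classical.propDecidable P)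

/-- The `n`-th binary digit of a real number `x ∈ (0,1]`. -/
noncomputable def bit (n : ℕ) (x : ℝ) : Bool := boolOf (⌊x * 2 ^ (n + 1)⌋ % 2 = 1)

/-- A countable family of i.i.d. uniform random variables on `[0,1]`, extracted
from a single uniform sample `x` by splitting its binary digits. -/
noncomputable def unif (i : ℕ) (x : ℝ) : ℝ :=
  ∑' k : ℕ, if bit (Nat.pair i k) x then ((2 : ℝ)⁻¹) ^ (k + 1) else 0

/-- A symmetric encoding of (unordered) pairs of vertices. -/
noncomputable def eIdx (u v : V) : ℕ :=
  min (Encodable.encode (u, v)) (Encodable.encode (v, u))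

/-- The uniform label attached to the edge `{u,v}`. -/
noncomputable def edgeU (u v : V) (x : ℝ) : ℝ := unif (2 * eIdx u v) x

/-- The uniform label attached to the vertex `v` (independent of the edge labels). -/
noncomputable def vtxU (v : V) (x : ℝ) : ℝ := unif (2 * Encodable.encode v + 1) x

/-- Edge configurations: a boolean (open/closed) for each (ordered) pair of
vertices; configurations arising from the model are symmetric and are
supported on pairs of adjacent vertices. -/
abbrev EdgeCfg : Type := V → V → Bool

/-- Colour configurations: a colour (black = `true`, white = `false`) for each vertex. -/
abbrev ColourCfg : Type := V → Bool

/-- Full configurations of the DaC model: an edge configuration together with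
a colour configuration. -/
abbrev Config : Type := EdgeCfg × ColourCfg

/-- The Bernoulli(p) edge configuration determined by the uniform sample `x`,
on the lattice with adjacency `adj`: an edge `{u,v}` of the lattice is open
iff its uniform label is `< p`. -/
noncomputable def edgeCfg (adj : V → V → Prop) (p : ℝ) (x : ℝ) : EdgeCfg :=
  fun u v => boolOf (adj u v) && boolOf (edgeU u v x < p)

/-- Connectivity through open edges of the edge configuration `η`. -/
def Conn (η : EdgeCfg) (u v : V) : Prop :=
  Relation.ReflTransGen (fun a b => η a b = true) u v

/-- The `p`-cluster of the vertex `v`: its connected component in the graph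
retaining only open edges. -/
def pCluster (η : EdgeCfg) (v : V) : Set V := {w | Conn η v w}

/-- Canonical representative of the `p`-cluster of `v`: the vertex of the
cluster with minimal encoding. -/
noncomputable def clusterRep (η : EdgeCfg) (v : V) : V :=
  (Encodable.decode (α := V) (sInf (Encodable.encode '' pCluster η v))).getD v

/-- The colour configuration with parameters `p, r` determined by the uniform
sample `x`: every `p`-cluster is coloured black (with probability `r`)
or white, independently of all other `p`-clusters, according to the uniform
label of its canonical representative. -/
noncomputable def colourCfg (adj : V → V → Prop) (p r : ℝ) (x : ℝ) : ColourCfg :=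
  fun v => boolOf (vtxU (clusterRep (edgeCfg adj p x) v) x < r)

/-- The uniform sample: Lebesgue measure on `(0,1]`. -/
noncomputable def base : Measure ℝ := volume.restrict (Set.Ioc 0 1)

/-- `ν_p`: the product Bernoulli(p) measure on edge configurations of the
lattice with adjacency `adj`. -/
noncomputable def edgeMeasure (adj : V → V → Prop) (p : ℝ) : Measure EdgeCfg :=
  base.map (edgeCfg adj p)

/-- `ℙ_{p,r}`: the DaC measure on pairs (edge configuration, colour
configuration) for the lattice with adjacency `adj`. -/
noncomputable def DaCMeasure (adj : V → V → Prop) (p r : ℝ) : Measure Config :=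
  base.map (fun x => (edgeCfg adj p x, colourCfg adj p r x))

/-- Monochromatic connectivity: `u` and `v` are joined by a path (for the
adjacency `adj`) all of whose vertices have colour `c`. -/
def MonoConn (adj : V → V → Prop) (ξ : ColourCfg) (c : Bool) (u v : V) : Prop :=
  Relation.ReflTransGen (fun a b => adj a b ∧ ξ a = c ∧ ξ b = c) u v

/-- The colour-`c` cluster of `v` (for the adjacency `adj`): empty if `v` does
not have colour `c`, and otherwise the maximal `adj`-connected set of
`c`-coloured vertices containing `v`. -/
def monoCluster (adj : V → V → Prop) (ξ : ColourCfg) (c : Bool) (v : V) : Set V :=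
  {w | ξ v = c ∧ MonoConn adj ξ c v w}

/-- The origin. -/
def origin : V := (0, 0)

/-- The size (cardinality) of a set of vertices, with values in `ℝ≥0∞`. -/
noncomputable def sizeE (S : Set V) : ℝ≥0∞ := S.encard

/-- The probability, under the DaC measure with edge adjacency `eadj` and
parameters `p, r`, that the origin lies in an infinite colour-`c` cluster for
the adjacency `cadj`. -/
noncomputable def percProb (eadj cadj : V → V → Prop) (c : Bool) (p r : ℝ) : ℝ≥0∞ :=
  DaCMeasure eadj p r {ω | (monoCluster cadj ω.2 c origin).Infinite}

/-- `Θ(p,r)` for the square lattice: probability that the origin lies in an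
infinite black `r`-cluster. -/
noncomputable def thetaSq (p r : ℝ) : ℝ≥0∞ := percProb SqAdj SqAdj true p r

/-- `Θ*(p,s)` for the square lattice: the `ℙ_{p,1-s}`-probability that the
origin lies in an infinite white `*`-cluster. -/
noncomputable def thetaStarSq (p s : ℝ) : ℝ≥0∞ := percProb SqAdj StarAdj false p (1 - s)

/-- `Θ(p,r)` for the triangular lattice. -/
noncomputable def thetaTri (p r : ℝ) : ℝ≥0∞ := percProb TriAdj TriAdj true p r

/-- The critical colouring density `r_c(p)` of the square lattice DaC model. -/
noncomputable def rcSq (p : ℝ) : ℝ :=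
  sSup {r : ℝ | r ∈ Set.Icc (0 : ℝ) 1 ∧ thetaSq p r = 0}

/-- The critical colouring density `r_c*(p)` for white `*`-percolation. -/
noncomputable def rcStarSq (p : ℝ) : ℝ :=
  sSup {s : ℝ | s ∈ Set.Icc (0 : ℝ) 1 ∧ thetaStarSq p s = 0}

/-- The critical colouring density `r_c(p)` of the triangular lattice DaC model. -/
noncomputable def rcTri (p : ℝ) : ℝ :=
  sSup {r : ℝ | r ∈ Set.Icc (0 : ℝ) 1 ∧ thetaTri p r = 0}

/-! ### Rectangles and crossings -/

/-- The rectangle `S_{n,m} = ([0,n] × [0,m]) ∩ ℤ²`. -/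
def Rect (n m : ℕ) : Set V :=
  {v | 0 ≤ v.1 ∧ v.1 ≤ (n : ℤ) ∧ 0 ≤ v.2 ∧ v.2 ≤ (m : ℤ)}

/-- The top side of `S_{n,m}`. -/
def TopSide (n m : ℕ) : Set V := {v | v ∈ Rect n m ∧ v.2 = (m : ℤ)}

/-- The bottom side of `S_{n,m}`. -/
def BotSide (n m : ℕ) : Set V := {v | v ∈ Rect n m ∧ v.2 = 0}

/-- The left side of `S_{n,m}`. -/
def LeftSide (n m : ℕ) : Set V := {v | v ∈ Rect n m ∧ v.1 = 0}

/-- The right side of `S_{n,m}`. -/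
def RightSide (n m : ℕ) : Set V := {v | v ∈ Rect n m ∧ v.1 = (n : ℤ)}

/-- There is a path (for the adjacency `adj`), all of whose vertices lie in the
region `R` and satisfy the predicate `good`, from the set `A` to the set `B`. -/
def HasCrossing (adj : V → V → Prop) (good : V → Prop) (R A B : Set V) : Prop :=
  ∃ (k : ℕ) (f : Fin (k + 1) → V),
    (∀ i, f i ∈ R ∧ good (f i)) ∧
    (∀ i : Fin k, adj (f i.castSucc) (f i.succ)) ∧
    f 0 ∈ A ∧ f (Fin.last k) ∈ B

/-- `V^b_{n,m}` as a set of colour configurations: there is a black vertical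
crossing of `S_{n,m}` (for the adjacency `adj`). -/
def VertBC (adj : V → V → Prop) (n m : ℕ) : Set ColourCfg :=
  {ξ | HasCrossing adj (fun v => ξ v = true) (Rect n m) (TopSide n m) (BotSide n m)}

/-- `V^{w*}_{n,m}` as a set of colour configurations: there is a white vertical
`*`-crossing of `S_{n,m}`. -/
def VertWStarC (n m : ℕ) : Set ColourCfg :=
  {ξ | HasCrossing StarAdj (fun v => ξ v = false) (Rect n m) (TopSide n m) (BotSide n m)}

/-- `H^{w*}_{n,m}` as a set of colour configurations: there is a white
horizontal `*`-crossing of `S_{n,m}`. -/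
def HorizWStarC (n m : ℕ) : Set ColourCfg :=
  {ξ | HasCrossing StarAdj (fun v => ξ v = false) (Rect n m) (LeftSide n m) (RightSide n m)}

/-- The event (set of full configurations) determined by a set of colour
configurations. -/
def colourEvent (C : Set ColourCfg) : Set Config := {ω | ω.2 ∈ C}

/-! ### Events depending on colours, increasing events, pivotal clusters -/

/-- The event `A` is defined in terms of the colours of the vertices in `W`. -/
def DependsOnColoursIn (A : Set Config) (W : Set V) : Prop :=
  ∀ ω ω' : Config, (∀ v ∈ W, ω.2 v = ω'.2 v) → (ω ∈ A ↔ ω' ∈ A)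

/-- The event `A` is increasing (for the partial order comparing colour
configurations pointwise, black = `true` above white = `false`). -/
def IncreasingColourEvent (A : Set Config) : Prop :=
  ∀ ω ω' : Config, (∀ v : V, ω.2 v = true → ω'.2 v = true) → ω ∈ A → ω' ∈ A

/-- Flip the colours of the vertices of `C`. -/
noncomputable def flipOn (C : Set V) (ξ : ColourCfg) : ColourCfg :=
  fun v => @ite _ (v ∈ C) (Classical.propDecidable _) (!ξ v) (ξ v)

/-- The set `C` is a pivotal `p`-cluster for the event `A` in the
configuration `ω`: `C` is a `p`-cluster of the edge configuration of `ω`, and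
flipping the colour of (all the vertices of) `C` changes whether the
configuration belongs to `A`. -/
def IsPivotal (A : Set Config) (ω : Config) (C : Set V) : Prop :=
  (∃ v : V, C = pCluster ω.1 v) ∧ ¬ (ω ∈ A ↔ (ω.1, flipOn C ω.2) ∈ A)

/-- `n(A)`: the number of pivotal `p`-clusters for the event `A`, with values
in `ℝ≥0∞`. -/
noncomputable def numPivotal (A : Set Config) (ω : Config) : ℝ≥0∞ :=
  {C : Set V | IsPivotal A ω C}.encard

/-! ### Barriers -/

/-- Connectivity in the square lattice avoiding the edges of `E`. -/
def AvoidConn (E : Set (V × V)) (u v : V) : Prop :=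
  Relation.ReflTransGen (fun a b => SqAdj a b ∧ (a, b) ∉ E ∧ (b, a) ∉ E) u v

/-- `E` is a barrier: a set of edges of the square lattice whose removal
(keeping the end-vertices) separates `ℤ²` into two or more connected
components, exactly one of which is infinite. -/
def IsBarrier (E : Set (V × V)) : Prop :=
  (∀ e ∈ E, SqAdj e.1 e.2) ∧
  (∃ v, {w | AvoidConn E v w}.Infinite) ∧
  (∀ v w, {x | AvoidConn E v x}.Infinite → {x | AvoidConn E w x}.Infinite → AvoidConn E v w) ∧
  (∃ v, {w | AvoidConn E v w}.Finite)

/-- The exterior of a barrier: its unique infinite complementary component. -/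
def barrierExt (E : Set (V × V)) : Set V := {v | {w | AvoidConn E v w}.Infinite}

/-- The interior of a barrier: the union of the finite complementary components. -/
def barrierInt (E : Set (V × V)) : Set V := {v | {w | AvoidConn E v w}.Finite}

/-- The event `A ⊆ EdgeCfg` is increasing (opening edges preserves it). -/
def IncreasingEdgeEvent (A : Set EdgeCfg) : Prop :=
  ∀ η η' : EdgeCfg, (∀ a b : V, η a b = true → η' a b = true) → η ∈ A → η' ∈ A

/-- The event `A ⊆ EdgeCfg` depends only on the states of the edges both of
whose endpoints lie in `W`. -/
def DependsOnEdgesIn (A : Set EdgeCfg) (W : Set V) : Prop :=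
  ∀ η η' : EdgeCfg, (∀ a b : V, a ∈ W → b ∈ W → η a b = η' a b) → (η ∈ A ↔ η' ∈ A)

/-! ### Translations -/

/-- Translation of configurations by the vector `u`. -/
def shift (u : V) (ω : Config) : Config :=
  (fun a b => ω.1 (a + u) (b + u), fun a => ω.2 (a + u))

end DaC

/-!
The coins thrown at the edges and at the vertices form an i.i.d. field, and a nonzero translation
moves every edge and every vertex along an infinite orbit. A measurable event is approximated by a
cylinder, and a far translate of a cylinder is independent of it, so translations act ergodically
on the field. Ergodicity passes to the DaC measure as soon as the DaC configuration is an
equivariant function of the field. The colour of a cluster is read off at the representative of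
minimal encoding, which is not equivariant; but when all clusters are finite, taking the
lexicographically minimal vertex instead does not change the joint law and is equivariant.

It remains to see that there is no infinite cluster when `p ≤ 1/2`, which is Harris's theorem. By
ergodicity there would otherwise be one almost surely, and then also in the dual percolation, which
is at least as dense. Following Zhang, the square-root trick, a consequence of the FKG inequality,
makes it likely that each half of each side of a large box is joined to infinity outside the box,
both by open edges and by open dual edges. Three open arms and three dual arms that alternate
around the box yield three distinct infinite clusters outside it. Opening the edges of the box
turns it into a trifurcation with positive probability; but the number of trifurcation boxes in a
large square is at most the length of its boundary (Burton–Keane), which is negligible compared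
with the area.
-/

namespace DaC

section Ergodic

variable {Ω : Type*} [MeasurableSpace Ω] {μ : Measure Ω} [IsProbabilityMeasure μ]

lemma abs_measureReal_sub_sq_le_of_indep {S : Ω → Ω} (hS : MeasurePreserving S μ μ)
    {A C : Set Ω} (hA : MeasurableSet A) (hC : MeasurableSet C) (hinv : S ⁻¹' A = A)
    (hind : μ.real (C ∩ S ⁻¹' C) = μ.real C ^ 2) :
    |μ.real A - μ.real A ^ 2| ≤ 4 * μ.real (symmDiff C A) := by
  have h_preimage : μ.real (symmDiff (S ⁻¹' C) A) = μ.real (symmDiff C A) := by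
    nth_rw 1 [← hinv]
    exact congrArg ENNReal.toReal (hS.measure_preimage (hC.symmDiff hA).nullMeasurableSet)
  have h_inter : |μ.real C ^ 2 - μ.real A| ≤ 2 * μ.real (symmDiff C A) := calc
    |μ.real C ^ 2 - μ.real A| ≤ μ.real (symmDiff (C ∩ S ⁻¹' C) A) := by
      rw [← hind]
      exact abs_measureReal_sub_le_measureReal_symmDiff
        (hC.inter (hS.measurable hC)).nullMeasurableSet hA.nullMeasurableSet
    _ ≤ μ.real (symmDiff C A ∪ symmDiff (S ⁻¹' C) A) := by
      refine measureReal_mono fun x => ?_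
      simp only [Set.mem_symmDiff, Set.mem_inter_iff, Set.mem_union]
      tauto
    _ ≤ μ.real (symmDiff C A) + μ.real (symmDiff (S ⁻¹' C) A) := measureReal_union_le _ _
    _ = 2 * μ.real (symmDiff C A) := by rw [h_preimage, two_mul]
  have h_sub : |μ.real C - μ.real A| ≤ μ.real (symmDiff C A) :=
    abs_measureReal_sub_le_measureReal_symmDiff hC.nullMeasurableSet hA.nullMeasurableSet
  have hA0 : 0 ≤ μ.real A := measureReal_nonneg
  have hC0 : 0 ≤ μ.real C := measureReal_nonneg
  have hA1 : μ.real A ≤ 1 := measureReal_le_one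
  have hC1 : μ.real C ≤ 1 := measureReal_le_one
  rw [abs_le] at h_inter h_sub ⊢
  constructor <;> nlinarith

theorem ergodic_of_isSetRing_of_indep {T : Ω → Ω} (hT : MeasurePreserving T μ μ)
    {𝒞 : Set (Set Ω)} (h𝒞 : IsSetRing 𝒞) (huniv : Set.univ ∈ 𝒞)
    (hgen : ‹MeasurableSpace Ω› = MeasurableSpace.generateFrom 𝒞)
    (hind : ∀ C ∈ 𝒞, ∃ n, μ.real (C ∩ T^[n] ⁻¹' C) = μ.real C ^ 2) : Ergodic T μ := by
  refine ⟨hT, ⟨fun A hA hinv => ?_⟩⟩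
  have h_sq : μ.real A - μ.real A ^ 2 = 0 := by
    refine abs_nonpos_iff.1 (le_of_forall_pos_le_add fun ε hε => ?_)
    obtain ⟨C, hC, hCA⟩ := exists_measure_symmDiff_lt_of_generateFrom_isSetRing (μ := μ) h𝒞
      ⟨{Set.univ}, Set.countable_singleton _, Set.singleton_subset_iff.2 huniv, by simp⟩
      hgen hA (ε := ENNReal.ofReal (ε / 4)) (by positivity)
    obtain ⟨n, hn⟩ := hind C hC
    have hCm : MeasurableSet C := hgen ▸ MeasurableSpace.measurableSet_generateFrom hC
    have hCA' : μ.real (symmDiff C A) ≤ ε / 4 :=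
      ENNReal.toReal_le_of_le_ofReal (by positivity) hCA.le
    have := abs_measureReal_sub_sq_le_of_indep (hT.iterate n) hA hCm
      (Function.IsFixedPt.preimage_iterate hinv n) hn
    linarith
  have h01 : μ.real A = 0 ∨ μ.real A = 1 := by
    rcases mul_eq_zero.1 (show μ.real A * (1 - μ.real A) = 0 by linarith) with h | h
    exacts [.inl h, .inr (by linarith)]
  rw [Filter.eventuallyConst_set']
  refine h01.imp (fun h => ae_eq_empty.2 <| (measureReal_eq_zero_iff).1 h) fun h => ?_
  rw [ae_eq_univ, prob_compl_eq_zero_iff hA]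
  exact (ENNReal.toReal_eq_one_iff _).1 h

end Ergodic

section Shift

variable {I X : Type*} [MeasurableSpace X] (m : I → Measure X) [∀ i, IsProbabilityMeasure (m i)]
  {τ : I → I}

lemma measurePreserving_comp_infinitePi (hinj : τ.Injective) (hτ : ∀ i, m (τ i) = m i) :
    MeasurePreserving (fun (x : I → X) i => x (τ i)) (Measure.infinitePi m)
      (Measure.infinitePi m) := by
  refine ⟨by fun_prop, ?_⟩
  rw [Measure.map_infinitePi_infinitePi_of_inj hinj]
  exact congrArg _ (funext hτ)

lemma infinitePi_inter_of_disjoint {F G : Finset I} (hFG : Disjoint F G)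
    {S : Set (F → X)} {S' : Set (G → X)} (hS : MeasurableSet S) (hS' : MeasurableSet S') :
    Measure.infinitePi m (cylinder (α := fun _ => X) F S ∩ cylinder (α := fun _ => X) G S') =
      Measure.infinitePi m (cylinder (α := fun _ => X) F S) *
        Measure.infinitePi m (cylinder (α := fun _ => X) G S') :=
  ((ProbabilityTheory.iIndepFun_infinitePi (P := m) (X := fun _ x => x)
    fun _ => measurable_id).indepFun_finset F G hFG
      fun i => measurable_pi_apply i).measure_inter_preimage_eq_mul S S' hS hS'

lemma exists_iterate_image_disjoint {I : Type*} [DecidableEq I] {τ : I → I} (hinj : τ.Injective)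
    (hper : ∀ i, i ∉ τ.periodicPts) (F : Finset I) : ∃ n, Disjoint F (F.image τ^[n]) := by
  have hfin : (⋃ q ∈ F ×ˢ F, {n | τ^[n] q.1 = q.2}).Finite := by
    refine (F ×ˢ F).finite_toSet.biUnion fun q _ => Set.Subsingleton.finite ?_
    have h_unique : ∀ n k, τ^[n] q.1 = q.2 → τ^[n + k] q.1 = q.2 → k = 0 := by
      intro n k hn hk
      by_contra hk0
      refine hper q.1 ⟨k, Nat.pos_of_ne_zero hk0, hinj.iterate n ?_⟩
      rw [← Function.iterate_add_apply, hn, hk]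
    intro n hn n' hn'
    rcases Nat.le_total n n' with h | h <;> obtain ⟨k, rfl⟩ := Nat.exists_eq_add_of_le h
    exacts [by simp [h_unique n k hn hn'], by simp [h_unique n' k hn' hn]]
  obtain ⟨n, hn⟩ := hfin.exists_notMem
  refine ⟨n, Finset.disjoint_left.2 fun i hi hi' => hn ?_⟩
  obtain ⟨j, hj, rfl⟩ := Finset.mem_image.1 hi'
  exact Set.mem_biUnion (Finset.mem_coe.2 (Finset.mk_mem_product hj hi)) rfl

theorem ergodic_comp_infinitePi (hinj : τ.Injective) (hτ : ∀ i, m (τ i) = m i)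
    (hper : ∀ i, i ∉ τ.periodicPts) :
    Ergodic (fun (x : I → X) i => x (τ i)) (Measure.infinitePi m) := by
  classical
  have hT := measurePreserving_comp_infinitePi m hinj hτ
  refine ergodic_of_isSetRing_of_indep hT isSetRing_measurableCylinders
    (univ_mem_measurableCylinders _) generateFrom_measurableCylinders.symm fun C hC => ?_
  obtain ⟨F, S, hS, rfl⟩ := (mem_measurableCylinders _).1 hC
  obtain ⟨n, hn⟩ := exists_iterate_image_disjoint hinj hper F
  refine ⟨n, ?_⟩
  have h_iterate : (fun (x : I → X) i => x (τ i))^[n] = fun x i => x (τ^[n] i) := by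
    clear hn
    induction n with
    | zero => rfl
    | succ n ih => funext x i; rw [Function.iterate_succ', ih]; simp
  let relabel : (F.image τ^[n] → X) → F → X := fun y i =>
    y ⟨τ^[n] i, Finset.mem_image_of_mem _ i.2⟩
  have h_cylinder : (fun (x : I → X) i => x (τ i))^[n] ⁻¹' cylinder (α := fun _ => X) F S =
      cylinder (F.image τ^[n]) (relabel ⁻¹' S) := by rw [h_iterate]; rfl
  have h_measure := (hT.iterate n).measureReal_preimage (hS.cylinder F).nullMeasurableSet
  rw [sq]
  nth_rw 2 [← h_measure]
  rw [h_cylinder, measureReal_def, infinitePi_inter_of_disjoint m hn hS (by measurability),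
    ENNReal.toReal_mul]
  rfl

end Shift

section Trifurcation

variable {α : Type*} {G H H' : SimpleGraph α} {B B' S : Set α}

lemma exists_reachable_sdiff (hB : H.support ⊆ B) {u w : α} (hu : u ∈ B) (h : G.Reachable u w) :
    ∃ y ∈ B, (G \ H).Reachable y w := by
  rw [SimpleGraph.reachable_iff_reflTransGen] at h
  induction h with
  | refl => exact ⟨u, hu, .refl u⟩
  | @tail b c _ hbc ih =>
    by_cases hH : H.Adj b c
    · exact ⟨c, hB ⟨b, hH.symm⟩, .refl c⟩
    · obtain ⟨y, hy, hyb⟩ := ih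
      exact ⟨y, hy, hyb.trans (SimpleGraph.Adj.reachable ⟨hbc, hH⟩)⟩

lemma reachable_sdiff_of_forall_not_reachable (hB : H.support ⊆ B) {y w : α}
    (hy : ∀ z ∈ B, ¬ G.Reachable y z) (h : G.Reachable y w) : (G \ H).Reachable y w := by
  have h' := h
  rw [SimpleGraph.reachable_iff_reflTransGen] at h'
  induction h' with
  | refl => exact .refl y
  | @tail b c hyb hbc ih =>
    rw [← SimpleGraph.reachable_iff_reflTransGen] at hyb
    exact (ih hyb).trans <| SimpleGraph.Adj.reachable
      ⟨hbc, fun hH => hy b (hB ⟨c, hH⟩) hyb⟩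

/-- The Burton–Keane notion of a trifurcation, with the branching vertex replaced by a connected
subgraph `H` of `G` spanning `B`: some three vertices of `B` lie in distinct components of `G \ H`,
all of which meet `S`. -/
structure IsTrifurcation (G H : SimpleGraph α) (B S : Set α) : Prop where
  le : H ≤ G
  support_subset : H.support ⊆ B
  reachable : ∀ u ∈ B, ∀ v ∈ B, H.Reachable u v
  exists_arms : ∃ x : Fin 3 → α, (∀ i, x i ∈ B) ∧
    (Pairwise fun i j => ¬ (G \ H).Reachable (x i) (x j)) ∧ ∀ i, ∃ s ∈ S, (G \ H).Reachable (x i) s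

lemma IsTrifurcation.reachable_sdiff (h : IsTrifurcation G H B S) (hd : Disjoint H H') {u v : α}
    (hu : u ∈ B) (hv : v ∈ B) : (G \ H').Reachable u v :=
  (h.reachable u hu v hv).mono (le_sdiff.2 ⟨h.le, hd⟩)

lemma IsTrifurcation.exists_two_arms_avoiding (h : IsTrifurcation G H B S) (ρ : α) :
    ∃ a ∈ B, ∃ b ∈ B, ¬ (G \ H).Reachable a b ∧ ¬ (G \ H).Reachable a ρ ∧
      ¬ (G \ H).Reachable b ρ ∧ (∃ s ∈ S, (G \ H).Reachable a s) ∧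
      ∃ s ∈ S, (G \ H).Reachable b s := by
  obtain ⟨x, hx, hsep, hS⟩ := h.exists_arms
  suffices ∃ i j, i ≠ j ∧ ¬ (G \ H).Reachable (x i) ρ ∧ ¬ (G \ H).Reachable (x j) ρ by
    obtain ⟨i, j, hij, hi, hj⟩ := this
    exact ⟨x i, hx i, x j, hx j, hsep hij, hi, hj, hS i, hS j⟩
  by_contra! hcon
  have h_one : ∀ i j, i ≠ j → (G \ H).Reachable (x i) ρ → ¬ (G \ H).Reachable (x j) ρ :=
    fun i j hij hi hj => hsep hij (hi.trans hj.symm)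
  have := hcon 0 1 (by decide)
  have := hcon 1 2 (by decide)
  have := h_one 0 1 (by decide)
  have := h_one 1 2 (by decide)
  have := hcon 0 2 (by decide)
  have := h_one 0 2 (by decide)
  tauto

variable [LinearOrder α]

lemma exists_isLeast_reachable (hS : S.Finite) {v : α} (h : ∃ s ∈ S, G.Reachable v s) :
    ∃ s, IsLeast {x | x ∈ S ∧ G.Reachable v x} s :=
  (hS.subset fun _ hx => hx.1).exists_minimal h |>.imp fun _ hs => minimal_iff_isLeast.1 hs

lemma isLeast_reachable_congr {u v s : α} (h : G.Reachable u v) :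
    IsLeast {x | x ∈ S ∧ G.Reachable u x} s ↔ IsLeast {x | x ∈ S ∧ G.Reachable v x} s := by
  have : {x | x ∈ S ∧ G.Reachable u x} = {x | x ∈ S ∧ G.Reachable v x} :=
    Set.ext fun x => and_congr_right fun _ => ⟨h.symm.trans, h.trans⟩
  rw [this]

/-- Call the least element of `S` in the component of `B` the root. The arms of `a` and `b` at the
trifurcation avoid the root, the least element of `S` on the arm of `a` is `s`, and the arm of `b`
contains the smaller element `s'` of `S`. -/
structure IsLabelledFork (G H : SimpleGraph α) (B S : Set α) (a b s s' : α) : Prop where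
  left_mem : a ∈ B
  right_mem : b ∈ B
  isLeast : IsLeast {x | x ∈ S ∧ (G \ H).Reachable a x} s
  right_label_mem : s' ∈ S
  reachable_right : (G \ H).Reachable b s'
  lt : s' < s
  root : ∀ ρ, IsLeast {x | x ∈ S ∧ G.Reachable a x} ρ →
    ¬ (G \ H).Reachable a ρ ∧ ¬ (G \ H).Reachable b ρ

lemma IsTrifurcation.exists_isLabelledFork (h : IsTrifurcation G H B S) (hS : S.Finite) :
    ∃ a b s s', IsLabelledFork G H B S a b s s' := by
  obtain ⟨x, hx, -, hxS⟩ := h.exists_arms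
  obtain ⟨ρ, hρ⟩ := exists_isLeast_reachable (G := G) hS
    ((hxS 0).imp fun s hs => ⟨hs.1, hs.2.mono sdiff_le⟩)
  obtain ⟨a, ha, b, hb, hab, haρ, hbρ, haS, hbS⟩ := h.exists_two_arms_avoiding ρ
  have h_root : ∀ c ∈ B, ∀ ρ', IsLeast {y | y ∈ S ∧ G.Reachable c y} ρ' → ρ' = ρ :=
    fun c hc ρ' hρ' => ((isLeast_reachable_congr ((h.reachable c hc _ (hx 0)).mono
      h.le)).1 hρ').unique hρ
  obtain ⟨s, hs⟩ := exists_isLeast_reachable hS haS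
  obtain ⟨s', hs'⟩ := exists_isLeast_reachable hS hbS
  have hne : s ≠ s' := by
    rintro rfl
    exact hab (hs.1.2.trans hs'.1.2.symm)
  rcases hne.lt_or_gt with hlt | hlt
  · exact ⟨b, a, s', s, hb, ha, hs', hs.1.1, hs.1.2, hlt, fun ρ' hρ' => by
      rw [h_root b hb ρ' hρ']; exact ⟨hbρ, haρ⟩⟩
  · exact ⟨a, b, s, s', ha, hb, hs, hs'.1.1, hs'.1.2, hlt, fun ρ' hρ' => by
      rw [h_root a ha ρ' hρ']; exact ⟨haρ, hbρ⟩⟩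

variable {a b s s' a' b' t t' : α}

-- Both arms of the fork at `B` avoid `B'`, hence lie in a single arm at `B'`; its least element
-- would be both `s` and at most `s'`.
lemma IsLabelledFork.not_reachable_of_avoid (hf : IsLabelledFork G H B S a b s s')
    (hf' : IsLabelledFork G H' B' S a' b' s t') (h : IsTrifurcation G H B S)
    (h' : IsTrifurcation G H' B' S) (hd : Disjoint H H') {ρ z : α}
    (ha : ¬ (G \ H).Reachable a ρ) (hb : ¬ (G \ H).Reachable b ρ) (hz : z ∈ B') :
    ¬ (G \ H).Reachable ρ z := by
  intro hρz
  have h_avoid : ∀ y w, ¬ (G \ H).Reachable y ρ → (G \ H).Reachable y w →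
      (G \ H').Reachable y w := by
    intro y w hy hyw
    have : ∀ z' ∈ B', ¬ (G \ H).Reachable y z' := fun z' hz' hyz' =>
      hy ((hyz'.trans (h'.reachable_sdiff hd.symm hz' hz)).trans hρz.symm)
    exact (reachable_sdiff_of_forall_not_reachable h'.support_subset this hyw).mono
      (sdiff_le_sdiff_right sdiff_le)
  have h_left := h_avoid a s ha hf.isLeast.1.2
  have h_right := h_avoid b s' hb hf.reachable_right
  have h_between := h.reachable_sdiff hd hf.left_mem hf.right_mem
  have : (G \ H').Reachable a' s' :=
    hf'.isLeast.1.2.trans (h_left.symm.trans (h_between.trans h_right))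
  exact (hf'.isLeast.2 ⟨hf.right_label_mem, this⟩).not_gt hf.lt

lemma IsLabelledFork.label_ne (hS : S.Finite) (hf : IsLabelledFork G H B S a b s s')
    (hf' : IsLabelledFork G H' B' S a' b' t t') (h : IsTrifurcation G H B S)
    (h' : IsTrifurcation G H' B' S) (hd : Disjoint H H') : s ≠ t := by
  rintro rfl
  have has : G.Reachable a s := hf.isLeast.1.2.mono sdiff_le
  have haa' : G.Reachable a a' := has.trans (hf'.isLeast.1.2.mono sdiff_le).symm
  obtain ⟨ρ, hρ⟩ := exists_isLeast_reachable hS ⟨s, hf.isLeast.1.1, has⟩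
  obtain ⟨ha, hb⟩ := hf.root ρ hρ
  obtain ⟨ha', hb'⟩ := hf'.root ρ ((isLeast_reachable_congr haa').1 hρ)
  have h_far : ∀ z ∈ B', ¬ (G \ H).Reachable ρ z := fun z hz =>
    hf.not_reachable_of_avoid hf' h h' hd ha hb hz
  obtain ⟨y, hy, hyρ⟩ := exists_reachable_sdiff h.support_subset hf.left_mem hρ.1.2
  have : (G \ H').Reachable ρ y :=
    (reachable_sdiff_of_forall_not_reachable h'.support_subset h_far hyρ.symm).mono
      (sdiff_le_sdiff_right sdiff_le)
  exact hf'.not_reachable_of_avoid hf h' h hd.symm ha' hb' hy this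

end Trifurcation

theorem card_le_card_of_isTrifurcation {α ι : Type*} {G : SimpleGraph α} {T : Finset ι}
    {S : Finset α} {H : ι → SimpleGraph α} {B : ι → Set α}
    (h : ∀ t ∈ T, IsTrifurcation G (H t) (B t) S)
    (hd : (T : Set ι).PairwiseDisjoint H) : T.card ≤ S.card := by
  classical
  let _ : LinearOrder α := linearOrderOfSTO WellOrderingRel
  have := fun t : T => (h t t.2).exists_isLabelledFork S.finite_toSet
  choose a b s s' hf using this
  have h_inj : Function.Injective fun t => (⟨s t, (hf t).isLeast.1.1⟩ : S) := by
    intro t t' hs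
    by_contra hne
    exact (hf t).label_ne S.finite_toSet (hf t') (h t t.2) (h t' t'.2)
      (hd t.2 t'.2 fun heq => hne (Subtype.ext heq)) (Subtype.ext_iff.1 hs)
  simpa using Fintype.card_le_of_injective _ h_inj

section Lattice

/-- Edges of the square lattice, encoded by an endpoint and a direction: `(v, false)` joins `v` to
its right neighbour and `(v, true)` joins `v` to its upper neighbour. -/
abbrev Edge : Type := V × Bool

/-- The left or lower endpoint of an edge. -/
def src (e : Edge) : V := e.1

/-- The right or upper endpoint of an edge. -/
def tgt (e : Edge) : V := if e.2 then (e.1.1, e.1.2 + 1) else (e.1.1 + 1, e.1.2)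

@[simp] lemma src_mk (v : V) (b : Bool) : src (v, b) = v := rfl
@[simp] lemma tgt_true (i j : ℤ) : tgt ((i, j), true) = (i, j + 1) := rfl
@[simp] lemma tgt_false (i j : ℤ) : tgt ((i, j), false) = (i + 1, j) := rfl

lemma src_ne_tgt (e : Edge) : src e ≠ tgt e := by
  obtain ⟨⟨i, j⟩, _ | _⟩ := e <;> simp

/-- `u` and `v` are the two endpoints of the edge `e`, in either order. -/
def Ends (e : Edge) (u v : V) : Prop := (src e = u ∧ tgt e = v) ∨ (src e = v ∧ tgt e = u)

lemma Ends.symm {e : Edge} {u v : V} (h : Ends e u v) : Ends e v u := Or.symm h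

lemma ends_src_tgt (e : Edge) : Ends e (src e) (tgt e) := .inl ⟨rfl, rfl⟩

lemma Ends.edge_eq {e e' : Edge} {u v : V} (h : Ends e u v) (h' : Ends e' u v) : e = e' := by
  obtain ⟨⟨i, j⟩, _ | _⟩ := e <;> obtain ⟨⟨k, l⟩, _ | _⟩ := e' <;>
    rcases h with ⟨rfl, rfl⟩ | ⟨rfl, rfl⟩ <;> rcases h' with ⟨h₁, h₂⟩ | ⟨h₁, h₂⟩ <;>
    simp_all <;> omega

/-- The square lattice with only the edges of `O` retained. -/
def openGraph (O : Set Edge) : SimpleGraph V where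
  Adj u v := ∃ e ∈ O, Ends e u v
  symm := ⟨fun _ _ ⟨e, he, h⟩ => ⟨e, he, h.symm⟩⟩
  loopless := ⟨by
    rintro _ ⟨e, -, ⟨rfl, h⟩ | ⟨rfl, h⟩⟩ <;> exact src_ne_tgt e h.symm⟩

/-- The vertices connected to `v` through edges of `O`. -/
def cluster (O : Set Edge) (v : V) : Set V := {w | (openGraph O).Reachable v w}

variable {O O' E : Set Edge} {u v w : V}

lemma openGraph_mono (h : O ⊆ O') : openGraph O ≤ openGraph O' :=
  fun _ _ ⟨e, he, h'⟩ => ⟨e, h he, h'⟩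

lemma openGraph_sdiff (O E : Set Edge) : openGraph (O \ E) = openGraph O \ openGraph E := by
  ext u v
  refine ⟨fun ⟨e, he, h⟩ => ⟨⟨e, he.1, h⟩, fun ⟨e', he', h'⟩ => he.2 (h.edge_eq h' ▸ he')⟩,
    fun ⟨⟨e, he, h⟩, h'⟩ => ⟨e, ⟨he, fun hE => h' ⟨e, hE, h⟩⟩, h⟩⟩

lemma disjoint_openGraph (h : Disjoint O O') : Disjoint (openGraph O) (openGraph O') := by
  rw [← sdiff_eq_left, ← openGraph_sdiff, h.sdiff_eq_left]

lemma cluster_mono (h : O ⊆ O') : cluster O v ⊆ cluster O' v :=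
  fun _ hw => hw.mono (openGraph_mono h)

lemma reachable_of_ends {e : Edge} (he : e ∈ O) (h : Ends e u v) : (openGraph O).Reachable u v :=
  SimpleGraph.Adj.reachable ⟨e, he, h⟩

/-- The edges with at least one endpoint in `A`. -/
def edgesTouching (A : Set V) : Set Edge := {e | src e ∈ A ∨ tgt e ∈ A}

/-- The edges with both endpoints in `A`. -/
def edgesWithin (A : Set V) : Set Edge := {e | src e ∈ A ∧ tgt e ∈ A}

/-- The box `[1-n,n]²` of primal vertices. It is symmetric about the vertex `(0,0)` of the dual
lattice, whose position in the plane is `(1/2,1/2)`. -/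
def primalBox (n : ℤ) : Set V := Set.Icc (1 - n, 1 - n) (n, n)

/-- The box `[-n,n]²` of dual vertices, consisting of all faces that meet `primalBox n`. -/
def dualBox (n : ℤ) : Set V := Set.Icc (-n, -n) (n, n)

lemma edgesWithin_subset_edgesTouching (A : Set V) : edgesWithin A ⊆ edgesTouching A :=
  fun _ h => .inl h.1

lemma Ends.mem_edgesTouching {e : Edge} {A : Set V} (h : Ends e u v) (hv : v ∈ A) :
    e ∈ edgesTouching A := by
  rcases h with ⟨-, rfl⟩ | ⟨rfl, -⟩
  exacts [.inr hv, .inl hv]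

lemma finite_edgesTouching {A : Set V} (hA : A.Finite) : (edgesTouching A).Finite := by
  have h_tgt : Set.InjOn (fun e : Edge => (tgt e, e.2)) Set.univ := by
    rintro ⟨⟨i, j⟩, _ | _⟩ - ⟨⟨k, l⟩, _ | _⟩ - h <;> simp_all
  refine ((hA.prod (Set.finite_univ (α := Bool))).union
    ((hA.prod (Set.finite_univ (α := Bool))).preimage (h_tgt.mono (Set.subset_univ _)))).subset ?_
  rintro e (h | h)
  exacts [.inl ⟨h, trivial⟩, .inr ⟨h, trivial⟩]

lemma reachable_of_edgesWithin_Icc_subset {p q : V} (hO : edgesWithin (Set.Icc p q) ⊆ O)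
    (hu : u ∈ Set.Icc p q) (hv : v ∈ Set.Icc p q) : (openGraph O).Reachable u v := by
  obtain ⟨a, c⟩ := p
  obtain ⟨b, d⟩ := q
  have h_horizontal : ∀ y, c ≤ y → y ≤ d → ∀ x, a ≤ x → x ≤ b →
      (openGraph O).Reachable (a, y) (x, y) := by
    intro y hcy hyd x hax
    induction x, hax using Int.leInduction with
    | base => exact fun _ => .refl _
    | succ x hax ih =>
      intro hxb
      refine (ih (by lia)).trans (reachable_of_ends (hO ?_) (ends_src_tgt ((x, y), false)))
      simp only [edgesWithin, Set.mem_ofPred_eq, src_mk, tgt_false, Set.mem_Icc, Prod.mk_le_mk]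
      lia
  have h_vertical : ∀ y, c ≤ y → y ≤ d → a ≤ b → (openGraph O).Reachable (a, c) (a, y) := by
    intro y hcy
    induction y, hcy using Int.leInduction with
    | base => exact fun _ _ => .refl _
    | succ y hcy ih =>
      intro hyd hab
      refine (ih (by lia) hab).trans (reachable_of_ends (hO ?_) (ends_src_tgt ((a, y), true)))
      simp only [edgesWithin, Set.mem_ofPred_eq, src_mk, tgt_true, Set.mem_Icc, Prod.mk_le_mk]
      lia
  have h_corner : ∀ z ∈ Set.Icc (a, c) (b, d), (openGraph O).Reachable (a, c) z := by
    rintro ⟨x, y⟩ ⟨⟨hax, hcy⟩, hxb, hyd⟩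
    exact (h_vertical y hcy hyd (hax.trans hxb)).trans (h_horizontal y hcy hyd x hax hxb)
  exact (h_corner u hu).symm.trans (h_corner v hv)

lemma exists_ends_of_infinite_cluster (h : (cluster O w).Infinite) : ∃ e ∈ O, ∃ v, Ends e w v := by
  obtain ⟨v, hv, hne⟩ := h.exists_notMem_finite (Set.finite_singleton w)
  rw [cluster, Set.mem_ofPred_eq, SimpleGraph.reachable_iff_reflTransGen,
    Relation.ReflTransGen.cases_head_iff] at hv
  obtain rfl | ⟨z, ⟨e, he, h_ends⟩, -⟩ := hv
  exacts [absurd rfl hne, ⟨e, he, z, h_ends⟩]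

lemma exists_infinite_cluster_sdiff {B : Set V} (hBf : B.Finite)
    (hB : (openGraph E).support ⊆ B) (hv : v ∈ B) (hi : (cluster O v).Infinite) :
    ∃ w ∈ B, (cluster (O \ E) w).Infinite := by
  by_contra! h
  refine hi ((hBf.biUnion (t := cluster (O \ E)) h).subset fun z hz => ?_)
  obtain ⟨y, hy, hyz⟩ := exists_reachable_sdiff hB hv hz
  exact Set.mem_biUnion hy (by rwa [cluster, openGraph_sdiff])

end Lattice

section Automorphisms

/-- An automorphism of the square lattice, given by its actions on vertices and on edges. -/
structure LatticeAut where
  vertex : V ≃ V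
  edge : Edge ≃ Edge
  ends_iff : ∀ e u v, Ends (edge e) (vertex u) (vertex v) ↔ Ends e u v

namespace LatticeAut

/-- The identity automorphism. -/
def refl : LatticeAut := ⟨.refl V, .refl Edge, fun _ _ _ => .rfl⟩

/-- The automorphism `g` followed by `g'`. -/
def trans (g g' : LatticeAut) : LatticeAut where
  vertex := g.vertex.trans g'.vertex
  edge := g.edge.trans g'.edge
  ends_iff e u v := (g'.ends_iff _ _ _).trans (g.ends_iff e u v)

/-- The graph isomorphism induced by a lattice automorphism. -/
def openGraphIso (g : LatticeAut) (O : Set Edge) : openGraph (g.edge ⁻¹' O) ≃g openGraph O where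
  toEquiv := g.vertex
  map_rel_iff' {u v} := by
    refine ⟨fun ⟨e, he, h⟩ => ⟨g.edge.symm e, by simpa, ?_⟩,
      fun ⟨e, he, h⟩ => ⟨g.edge e, he, (g.ends_iff e u v).2 h⟩⟩
    rwa [← g.ends_iff, Equiv.apply_symm_apply]

lemma reachable_iff (g : LatticeAut) {O : Set Edge} {u v : V} :
    (openGraph O).Reachable (g.vertex u) (g.vertex v) ↔
      (openGraph (g.edge ⁻¹' O)).Reachable u v :=
  (g.openGraphIso O).reachable_iff

lemma infinite_cluster_iff (g : LatticeAut) {O : Set Edge} {v : V} :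
    (cluster O (g.vertex v)).Infinite ↔ (cluster (g.edge ⁻¹' O) v).Infinite := by
  rw [← Set.infinite_image_iff (s := cluster (g.edge ⁻¹' O) v) g.vertex.injective.injOn]
  refine iff_of_eq (congr_arg Set.Infinite (Set.ext fun w => ?_))
  obtain ⟨w, rfl⟩ := g.vertex.surjective w
  rw [g.vertex.injective.mem_set_image]
  exact g.reachable_iff

end LatticeAut

/-- The translation of the lattice by `t`. -/
def translation (t : V) : LatticeAut where
  vertex := Equiv.addRight t
  edge := (Equiv.addRight t).prodCongr (Equiv.refl Bool)
  ends_iff := by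
    rintro ⟨⟨i, j⟩, _ | _⟩ u v <;> simp [Ends, Prod.ext_iff, tgt, src] <;> lia

/-- The exchange of the two coordinates. -/
def diagonalReflection : LatticeAut where
  vertex := Equiv.prodComm ℤ ℤ
  edge := (Equiv.prodComm ℤ ℤ).prodCongr Equiv.boolNot
  ends_iff := by
    rintro ⟨⟨i, j⟩, _ | _⟩ ⟨a, b⟩ ⟨c, d⟩ <;> simp [Ends, src, tgt, and_comm]

/-- The reflection `(x, y) ↦ (c - x, y)`. -/
def reflection (c : ℤ) : LatticeAut where
  vertex := (Equiv.subLeft c).prodCongr (Equiv.refl ℤ)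
  edge :=
    Function.Involutive.toPerm (fun e => ((if e.2 then c - e.1.1 else c - e.1.1 - 1, e.1.2), e.2))
      (by rintro ⟨⟨i, j⟩, _ | _⟩ <;> simp; lia)
  ends_iff := by
    rintro ⟨⟨i, j⟩, _ | _⟩ ⟨a, b⟩ ⟨c, d⟩ <;>
      simp [Ends, src, tgt, Function.Involutive.toPerm]; lia

/-- The symmetry of the lattice that swaps the coordinates if `k.2.2` holds, and then applies the
reflections `x ↦ c - x` if `k.1` holds and `y ↦ c - y` if `k.2.1` holds. -/
def squareSymmetry (c : ℤ) (k : Bool × Bool × Bool) : LatticeAut :=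
  (if k.2.2 then diagonalReflection else .refl).trans
    ((if k.1 then reflection c else .refl).trans
      (if k.2.1 then diagonalReflection.trans ((reflection c).trans diagonalReflection) else .refl))

lemma squareSymmetry_vertex (c : ℤ) (k : Bool × Bool × Bool) (v : V) :
    (squareSymmetry c k).vertex v =
      Prod.map (fun x => if k.1 then c - x else x) (fun y => if k.2.1 then c - y else y)
        (if k.2.2 then v.swap else v) := by
  obtain ⟨_ | _, _ | _, _ | _⟩ := k <;> rfl

end Automorphisms

section Duality

/-- The primal edge crossed by a dual edge. The dual vertex `(i, j)` stands for the face
`[i, i + 1] × [j, j + 1]`, so that both lattices share the encoding `Edge`. -/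
def cross (e : Edge) : Edge :=
  if e.2 then ((e.1.1, e.1.2 + 1), false) else ((e.1.1 + 1, e.1.2), true)

@[simp] lemma cross_true (i j : ℤ) : cross ((i, j), true) = ((i, j + 1), false) := rfl
@[simp] lemma cross_false (i j : ℤ) : cross ((i, j), false) = ((i + 1, j), true) := rfl

lemma cross_injective : Function.Injective cross := by
  rintro ⟨⟨i, j⟩, _ | _⟩ ⟨⟨k, l⟩, _ | _⟩ h <;> simp_all

lemma cross_mem_edgesTouching {n : ℤ} (hn : 1 ≤ n) (e : Edge) :
    cross e ∈ edgesTouching (primalBox n) ↔ e ∈ edgesWithin (dualBox n) := by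
  obtain ⟨⟨i, j⟩, _ | _⟩ := e <;> simp [edgesTouching, edgesWithin, primalBox, dualBox] <;> lia

/-- The dual configuration: a dual edge is open when the primal edge it crosses is closed. -/
def dualOpen (O : Set Edge) : Set Edge := {e | cross e ∉ O}

end Duality

section Chains

variable {C : Edge →₀ ZMod 2}

/-- The boundary of a mod 2 chain of edges. -/
noncomputable def boundary : (Edge →₀ ZMod 2) →ₗ[ZMod 2] (V →₀ ZMod 2) :=
  Finsupp.lmapDomain (ZMod 2) (ZMod 2) src + Finsupp.lmapDomain (ZMod 2) (ZMod 2) tgt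

@[simp] lemma boundary_single (e : Edge) (c : ZMod 2) :
    boundary (.single e c) = .single (src e) c + .single (tgt e) c := by
  simp [boundary, Finsupp.mapDomain_single]

lemma Ends.boundary_single {e : Edge} {u v : V} (h : Ends e u v) (c : ZMod 2) :
    boundary (.single e c) = .single u c + .single v c := by
  rcases h with ⟨rfl, rfl⟩ | ⟨rfl, rfl⟩
  exacts [DaC.boundary_single e c, (DaC.boundary_single e c).trans (add_comm _ _)]

lemma exists_chain {O : Set Edge} {u v : V} (h : (openGraph O).Reachable u v) :
    ∃ C : Edge →₀ ZMod 2, (∀ e ∉ O, C e = 0) ∧ boundary C = .single u 1 + .single v 1 := by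
  rw [SimpleGraph.reachable_iff_reflTransGen] at h
  induction h with
  | refl => exact ⟨0, by simp, by rw [ZModModule.add_self, map_zero]⟩
  | @tail b c _ h ih =>
    obtain ⟨C, hC, hbd⟩ := ih
    obtain ⟨e, he, hends⟩ := h
    refine ⟨C + .single e 1, fun e' he' => ?_, ?_⟩
    · have hne : e' ≠ e := by
        rintro rfl
        exact he' he
      rw [Finsupp.add_apply, hC e' he', Finsupp.single_eq_of_ne hne, add_zero]
    · rw [map_add, hbd, hends.boundary_single, add_assoc, ← add_assoc (Finsupp.single b 1),
        ZModModule.add_self, zero_add]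

/-- The indicator function of the open upward ray from `v`. -/
def ray (v z : V) : ZMod 2 := if z.1 = v.1 ∧ v.2 < z.2 then 1 else 0

/-- The number, mod 2, of edges of `C` crossed by the upward ray from the dual vertex `v`. For a
cycle `C` this is the winding number of `C` around `v`. -/
noncomputable def potential (C : Edge →₀ ZMod 2) (v : V) : ZMod 2 :=
  Finsupp.linearCombination (ZMod 2) (fun e : Edge => if e.2 then 0 else ray v e.1) C

lemma potential_vertical (C : Edge →₀ ZMod 2) (i j : ℤ) :
    potential C (i, j) + potential C (i, j + 1) = C ((i, j + 1), false) := by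
  unfold potential
  induction C using Finsupp.induction_linear with
  | zero => simp
  | add C D hC hD =>
    rw [map_add, map_add, Finsupp.add_apply, ← hC, ← hD]
    ring
  | single e c =>
    obtain ⟨⟨k, l⟩, _ | _⟩ := e
    · have := CharTwo.add_self_eq_zero c
      simp only [Finsupp.linearCombination_single, ray, smul_eq_mul, Finsupp.single_apply]
      grind
    · simp

lemma potential_horizontal (C : Edge →₀ ZMod 2) (i j : ℤ) :
    potential C (i, j) + potential C (i + 1, j) + C ((i + 1, j), true) =
      Finsupp.linearCombination (ZMod 2) (ray (i + 1, j)) (boundary C) := by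
  unfold potential
  induction C using Finsupp.induction_linear with
  | zero => simp
  | add C D hC hD =>
    rw [map_add, map_add, map_add, map_add, Finsupp.add_apply, ← hC, ← hD]
    ring
  | single e c =>
    have := CharTwo.add_self_eq_zero c
    obtain ⟨⟨k, l⟩, _ | _⟩ := e <;>
      simp only [boundary_single, map_add, Finsupp.linearCombination_single, ray, src_mk, tgt_true,
        tgt_false, smul_eq_mul, Finsupp.single_apply] <;> grind

lemma potential_add_potential (hC : boundary C = 0) (e : Edge) :
    potential C (src e) + potential C (tgt e) = C (cross e) := by
  obtain ⟨⟨i, j⟩, _ | _⟩ := e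
  · have := potential_horizontal C i j
    rwa [hC, map_zero, CharTwo.add_eq_zero] at this
  · exact potential_vertical C i j

lemma exists_ray_ne_zero {v : V} (h : potential C v ≠ 0) :
    ∃ k, v.2 < k ∧ C ((v.1, k), false) ≠ 0 := by
  rw [potential, Finsupp.linearCombination_apply] at h
  obtain ⟨⟨⟨i, k⟩, b⟩, he, hne⟩ := Finset.exists_ne_zero_of_sum_ne_zero h
  rw [Finsupp.mem_support_iff] at he
  simp only [ray, smul_eq_mul] at hne
  grind

lemma finite_support_potential (hC : boundary C = 0) : (potential C).support.Finite := by
  obtain ⟨⟨a, c⟩, h_lower⟩ := (C.support.image Prod.fst).bddBelow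
  obtain ⟨⟨b, d⟩, h_upper⟩ := (C.support.image Prod.fst).bddAbove
  have h_mem : ∀ e, C e ≠ 0 → e.1 ∈ Set.Icc (a, c) (b, d) := fun e he =>
    have := Finset.mem_image_of_mem Prod.fst (Finsupp.mem_support_iff.2 he)
    ⟨h_lower this, h_upper this⟩
  refine (Set.finite_Icc (a, c) (b, d)).subset fun v hv => ?_
  obtain ⟨k, hvk, hk⟩ := exists_ray_ne_zero hv
  obtain ⟨⟨hak, -⟩, hkb, hkd⟩ := h_mem _ hk
  refine ⟨⟨hak, ?_⟩, hkb, hvk.le.trans hkd⟩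
  by_contra! h_below
  have h_periodic : Function.Periodic (fun i => potential C (i, v.2)) 1 := by
    intro i
    have h_zero : C ((i + 1, v.2), true) = 0 := by
      by_contra h
      exact h_below.not_ge (h_mem _ h).1.2
    have := potential_add_potential hC ((i, v.2), false)
    rwa [cross_false, h_zero, CharTwo.add_eq_zero, eq_comm] at this
  obtain ⟨l, -, hl⟩ := exists_ray_ne_zero (C := C) (v := (b + 1, v.2)) <| by
    have h_shift := h_periodic.int_mul (b + 1 - v.1) v.1
    rw [mul_one, Int.cast_id, add_sub_cancel] at h_shift
    exact h_shift.trans_ne hv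
  exact (h_mem _ hl).2.1.not_gt (lt_add_one b)

lemma eq_of_reachable {D : Set Edge} {w : V → ZMod 2} (hw : ∀ e ∈ D, w (src e) = w (tgt e))
    {f g : V} (h : (openGraph D).Reachable f g) : w f = w g := by
  rw [SimpleGraph.reachable_iff_reflTransGen] at h
  induction h with
  | refl => rfl
  | tail _ h ih =>
    obtain ⟨e, he, ⟨rfl, rfl⟩ | ⟨rfl, rfl⟩⟩ := h
    exacts [ih.trans (hw e he), ih.trans (hw e he).symm]

lemma potential_eq_of_reachable (hC : boundary C = 0) {D : Set Edge}
    (hD : ∀ e ∈ D, C (cross e) = 0) {f g : V} (h : (openGraph D).Reachable f g) :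
    potential C f = potential C g := by
  refine eq_of_reachable (fun e he => ?_) h
  rw [← CharTwo.add_eq_zero, potential_add_potential hC, hD e he]

lemma potential_eq_zero_of_infinite (hC : boundary C = 0) {D : Set Edge}
    (hD : ∀ e ∈ D, C (cross e) = 0) {f : V} (hf : (cluster D f).Infinite) : potential C f = 0 := by
  by_contra hne
  refine hf ((finite_support_potential hC).subset fun g hg => ?_)
  rwa [Function.mem_support, ← potential_eq_of_reachable hC hD hg]

end Chains

section Separation

variable {n : ℤ} {O : Set Edge}

/-- The primal edges joining `primalBox n` to its complement. -/
def boxBoundary (n : ℤ) : Set Edge := edgesTouching (primalBox n) \ edgesWithin (primalBox n)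

/-- The dual edges along the boundary of `dualBox n` crossing neither `e₁` nor `e₂`. -/
def dualRing (n : ℤ) (e₁ e₂ : Edge) : Set Edge := {e | cross e ∈ boxBoundary n \ {e₁, e₂}}

lemma Ends.mem_boxBoundary {e : Edge} {x y : V} (h : Ends e x y) (hx : x ∉ primalBox n)
    (hy : y ∈ primalBox n) : e ∈ boxBoundary n := by
  refine ⟨h.mem_edgesTouching hy, fun he => hx ?_⟩
  rcases h with ⟨rfl, -⟩ | ⟨-, rfl⟩
  exacts [he.1, he.2]

-- Closing the path from `x₁` to `x₂` up through the box gives a cycle that avoids the infinite dual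
-- clusters of `f` and `f'`, so that its winding number vanishes there, but changes parity once
-- along the dual path from `f` to `f'` around the box.
lemma not_reachable_of_infinite_dual (hn : 1 ≤ n) {x₁ x₂ y₁ y₂ f f' : V} {d e₂ : Edge}
    (h₁ : Ends (cross d) x₁ y₁) (h₂ : Ends e₂ x₂ y₂) (hne : cross d ≠ e₂)
    (hx₁ : x₁ ∉ primalBox n) (hx₂ : x₂ ∉ primalBox n) (hy₁ : y₁ ∈ primalBox n)
    (hy₂ : y₂ ∈ primalBox n)
    (hf : (cluster (dualOpen O \ edgesWithin (dualBox n)) f).Infinite)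
    (hf' : (cluster (dualOpen O \ edgesWithin (dualBox n)) f').Infinite)
    (hd : (openGraph (dualRing n (cross d) e₂)).Reachable f (src d))
    (hd' : (openGraph (dualRing n (cross d) e₂)).Reachable f' (tgt d)) :
    ¬ (openGraph (O \ edgesTouching (primalBox n))).Reachable x₁ x₂ := by
  intro h
  obtain ⟨C₁, hC₁, hbd₁⟩ := exists_chain h
  obtain ⟨C₂, hC₂, hbd₂⟩ := exists_chain (reachable_of_edgesWithin_Icc_subset subset_rfl hy₁ hy₂)
  have he₁ := h₁.mem_boxBoundary hx₁ hy₁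
  have he₂ := h₂.mem_boxBoundary hx₂ hy₂
  let C := C₁ + C₂ + .single (cross d) 1 + .single e₂ 1
  have hC : boundary C = 0 := by
    rw [map_add, map_add, map_add, hbd₁, hbd₂, h₁.boundary_single, h₂.boundary_single]
    have := fun v : V => ZModModule.add_self (Finsupp.single v (1 : ZMod 2))
    linear_combination (norm := module) this x₁ + this x₂ + this y₁ + this y₂
  have h_eval : ∀ e, e ≠ cross d → e ≠ e₂ → C e = C₁ e + C₂ e := fun e hd he => by
    simp [C, Finsupp.single_eq_of_ne hd, Finsupp.single_eq_of_ne he]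
  have h_dual : ∀ e ∈ dualOpen O \ edgesWithin (dualBox n), C (cross e) = 0 := by
    rintro e ⟨hO, hbox⟩
    rw [← cross_mem_edgesTouching hn] at hbox
    rw [h_eval (cross e) (fun h => hbox (h ▸ he₁.1)) (fun h => hbox (h ▸ he₂.1)),
      hC₁ _ (fun h => hO h.1), hC₂ _ (fun h => hbox (.inl h.1)), add_zero]
  have h_around : ∀ e ∈ dualRing n (cross d) e₂, C (cross e) = 0 := by
    rintro e ⟨he, hde⟩
    rw [h_eval _ (fun h => hde (.inl h)) (fun h => hde (.inr h)), hC₁ _ (fun h => h.2 he.1),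
      hC₂ _ he.2, add_zero]
  have h_flip : C (cross d) = 1 := by
    simp [C, hC₁ _ (fun h => h.2 he₁.1), hC₂ _ he₁.2, Finsupp.single_eq_of_ne hne]
  rw [← potential_add_potential hC d, ← potential_eq_of_reachable hC h_around hd,
    ← potential_eq_of_reachable hC h_around hd', potential_eq_zero_of_infinite hC h_dual hf,
    potential_eq_zero_of_infinite hC h_dual hf', add_zero] at h_flip
  exact zero_ne_one h_flip

section DualRing

variable {l m : ℤ} {e₁ e₂ : Edge}

lemma reachable_dualRing_top (hl : -n ≤ l) (hlm : l ≤ m) (hm : m ≤ n)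
    (h : ∀ t, l < t → t ≤ m → ((t, n), true) ≠ e₁ ∧ ((t, n), true) ≠ e₂) :
    (openGraph (dualRing n e₁ e₂)).Reachable (l, n) (m, n) := by
  refine reachable_of_edgesWithin_Icc_subset (p := (l, n)) (q := (m, n)) ?_
    (by simpa) (by simpa)
  rintro ⟨⟨s, t⟩, _ | _⟩ he <;>
    simp only [edgesWithin, Set.mem_ofPred_eq, src_mk, tgt_false, tgt_true, Set.mem_Icc,
      Prod.mk_le_mk] at he
  · obtain rfl : t = n := by lia
    exact ⟨by simp [boxBoundary, edgesTouching, edgesWithin, primalBox]; lia,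
      not_or.2 (h (s + 1) (by lia) (by lia))⟩
  · lia

lemma reachable_dualRing_bottom (hl : -n ≤ l) (hlm : l ≤ m) (hm : m ≤ n)
    (h : ∀ t, l < t → t ≤ m → ((t, -n), true) ≠ e₁ ∧ ((t, -n), true) ≠ e₂) :
    (openGraph (dualRing n e₁ e₂)).Reachable (l, -n) (m, -n) := by
  refine reachable_of_edgesWithin_Icc_subset (p := (l, -n)) (q := (m, -n)) ?_
    (by simpa) (by simpa)
  rintro ⟨⟨s, t⟩, _ | _⟩ he <;>
    simp only [edgesWithin, Set.mem_ofPred_eq, src_mk, tgt_false, tgt_true, Set.mem_Icc,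
      Prod.mk_le_mk] at he
  · obtain rfl : t = -n := by lia
    exact ⟨by simp [boxBoundary, edgesTouching, edgesWithin, primalBox]; lia,
      not_or.2 (h (s + 1) (by lia) (by lia))⟩
  · lia

lemma reachable_dualRing_right (hl : -n ≤ l) (hlm : l ≤ m) (hm : m ≤ n)
    (h : ∀ t, l < t → t ≤ m → ((n, t), false) ≠ e₁ ∧ ((n, t), false) ≠ e₂) :
    (openGraph (dualRing n e₁ e₂)).Reachable (n, l) (n, m) := by
  refine reachable_of_edgesWithin_Icc_subset (p := (n, l)) (q := (n, m)) ?_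
    (by simpa) (by simpa)
  rintro ⟨⟨s, t⟩, _ | _⟩ he <;>
    simp only [edgesWithin, Set.mem_ofPred_eq, src_mk, tgt_false, tgt_true, Set.mem_Icc,
      Prod.mk_le_mk] at he
  · lia
  · obtain rfl : s = n := by lia
    exact ⟨by simp [boxBoundary, edgesTouching, edgesWithin, primalBox]; lia,
      not_or.2 (h (t + 1) (by lia) (by lia))⟩

end DualRing

end Separation

section Arms

variable {n : ℤ} {O : Set Edge}

/-- The eight halves of the sides of the square `[-n, n + c]²`, without its corners when `c = 1`:
the right half of the top side is carried to the others by the symmetries of the square. -/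
def halfSide (c n : ℤ) (k : Bool × Bool × Bool) : Set V :=
  (squareSymmetry c k).vertex ⁻¹' Set.Icc (c, n + c) (n, n + c)

/-- Some vertex of `S` lies in an infinite cluster once the edges of `E` are removed. -/
def HasArm (E : Set Edge) (S : Set V) (O : Set Edge) : Prop :=
  ∃ v ∈ S, (cluster (O \ E) v).Infinite

/-- Outside the box there are three distinct infinite clusters reaching its neighbourhood. -/
def HasThreeArms (n : ℤ) (O : Set Edge) : Prop :=
  ∃ x : Fin 3 → V, (∀ i, x i ∈ (openGraph (edgesTouching (primalBox n))).support) ∧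
    (∀ i, (cluster (O \ edgesTouching (primalBox n)) (x i)).Infinite) ∧
    Pairwise fun i j => ¬ (openGraph (O \ edgesTouching (primalBox n))).Reachable (x i) (x j)

lemma mem_support_edgesTouching {e : Edge} {A : Set V} {u v : V} (h : Ends e u v) (hv : v ∈ A) :
    u ∈ (openGraph (edgesTouching A)).support :=
  ⟨v, e, h.mem_edgesTouching hv, h⟩

lemma pairwise_not_reachable_fin_three {α : Type*} {G : SimpleGraph α} {x y z : α}
    (hxy : ¬ G.Reachable x y) (hxz : ¬ G.Reachable x z) (hyz : ¬ G.Reachable y z) :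
    Pairwise fun i j => ¬ G.Reachable (![x, y, z] i) (![x, y, z] j) := by
  intro i j hij
  fin_cases i <;> fin_cases j <;> first | exact absurd rfl hij | skip
  exacts [hxy, hxz, mt .symm hxy, hyz, mt .symm hxz, mt .symm hyz]

section

variable {a i j k x y : ℤ} (ha : 0 ≤ a ∧ a < n) (hi : -n ≤ i ∧ i ≤ 0) (hj : 0 ≤ j ∧ j ≤ n)
  (hk : 0 ≤ k ∧ k ≤ n) (hx : 1 - n ≤ x ∧ x ≤ 0) (hy : -n ≤ y ∧ y < 0)
  (h_top : (cluster (dualOpen O \ edgesWithin (dualBox n)) (i, n)).Infinite)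
  (h_right : (cluster (dualOpen O \ edgesWithin (dualBox n)) (n, j)).Infinite)
  (h_bottom : (cluster (dualOpen O \ edgesWithin (dualBox n)) (k, -n)).Infinite)

include ha hi hj hy h_top h_right in
lemma not_reachable_top_right :
    ¬ (openGraph (O \ edgesTouching (primalBox n))).Reachable (a + 1, n + 1) (n + 1, y + 1) :=
  not_reachable_of_infinite_dual (by lia) (d := ((a, n), false)) (e₂ := ((n, y + 1), false))
    (y₁ := (a + 1, n)) (y₂ := (n, y + 1)) (.inr ⟨rfl, rfl⟩) (.inr ⟨rfl, rfl⟩) (by simp)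
    (by simp [primalBox]) (by simp [primalBox]) (by simp [primalBox]; lia)
    (by simp [primalBox]; lia) h_top h_right
    (reachable_dualRing_top hi.1 (by lia) ha.2.le fun t _ _ => ⟨by simp; lia, by simp⟩)
    ((reachable_dualRing_right (by lia) hj.2 le_rfl fun t _ _ => ⟨by simp, by simp; lia⟩).trans
      (reachable_dualRing_top (by lia) (by lia) le_rfl fun t _ _ => ⟨by simp; lia, by simp⟩).symm)

include ha hi hj hx h_top h_right in
lemma not_reachable_top_bottom :
    ¬ (openGraph (O \ edgesTouching (primalBox n))).Reachable (a + 1, n + 1) (x, -n) :=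
  not_reachable_of_infinite_dual (by lia) (d := ((a, n), false)) (e₂ := ((x, -n), true))
    (y₁ := (a + 1, n)) (y₂ := (x, -n + 1)) (.inr ⟨rfl, rfl⟩) (.inl ⟨rfl, rfl⟩) (by simp; lia)
    (by simp [primalBox]) (by simp [primalBox]) (by simp [primalBox]; lia)
    (by simp [primalBox]; lia) h_top h_right
    (reachable_dualRing_top hi.1 (by lia) ha.2.le fun t _ _ => ⟨by simp; lia, by simp; lia⟩)
    ((reachable_dualRing_right (by lia) hj.2 le_rfl fun t _ _ => ⟨by simp, by simp⟩).trans
      (reachable_dualRing_top (by lia) (by lia) le_rfl fun t _ _ =>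
        ⟨by simp; lia, by simp; lia⟩).symm)

include hj hk hx hy h_right h_bottom in
lemma not_reachable_right_bottom :
    ¬ (openGraph (O \ edgesTouching (primalBox n))).Reachable (n + 1, y + 1) (x, -n) :=
  not_reachable_of_infinite_dual (by lia) (d := ((n, y), true)) (e₂ := ((x, -n), true))
    (y₁ := (n, y + 1)) (y₂ := (x, -n + 1)) (.inr ⟨rfl, rfl⟩) (.inl ⟨rfl, rfl⟩) (by simp)
    (by simp [primalBox]) (by simp [primalBox]) (by simp [primalBox]; lia)
    (by simp [primalBox]; lia) h_bottom h_right
    ((reachable_dualRing_bottom (by lia) hk.2 le_rfl fun t _ _ => ⟨by simp, by simp; lia⟩).trans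
      (reachable_dualRing_right (e₁ := ((n, y + 1), false)) le_rfl hy.1 (by lia) fun t _ _ =>
        ⟨by simp; lia, by simp⟩))
    (reachable_dualRing_right (e₁ := ((n, y + 1), false)) (by lia) (by lia) hj.2 fun t _ _ =>
      ⟨by simp; lia, by simp⟩).symm

end

lemma HasThreeArms.of_alternating
    (hp₁ : HasArm (edgesTouching (primalBox n)) (halfSide 1 n (false, false, false)) O)
    (hp₂ : HasArm (edgesTouching (primalBox n)) (halfSide 1 n (true, false, true)) O)
    (hp₃ : HasArm (edgesTouching (primalBox n)) (halfSide 1 n (true, true, false)) O)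
    (hd₁ : HasArm (edgesWithin (dualBox n)) (halfSide 0 n (true, false, false)) (dualOpen O))
    (hd₂ : HasArm (edgesWithin (dualBox n)) (halfSide 0 n (false, false, true)) (dualOpen O))
    (hd₃ : HasArm (edgesWithin (dualBox n)) (halfSide 0 n (false, true, false)) (dualOpen O)) :
    HasThreeArms n O := by
  obtain ⟨⟨a, b⟩, ha, hp₁⟩ := hp₁
  obtain ⟨⟨c, y⟩, hy, hp₂⟩ := hp₂
  obtain ⟨⟨x, d⟩, hx, hp₃⟩ := hp₃
  obtain ⟨⟨i, i'⟩, hi, hd₁⟩ := hd₁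
  obtain ⟨⟨j', j⟩, hj, hd₂⟩ := hd₂
  obtain ⟨⟨k, k'⟩, hk, hd₃⟩ := hd₃
  simp only [halfSide, Set.mem_preimage, squareSymmetry_vertex, Prod.swap, Prod.map,
    Set.mem_Icc, Prod.mk_le_mk, if_true, Bool.false_eq_true, if_false] at ha hy hx hi hj hk
  obtain ⟨a, rfl⟩ : ∃ a', a = a' + 1 := ⟨a - 1, by lia⟩
  obtain ⟨y, rfl⟩ : ∃ y', y = y' + 1 := ⟨y - 1, by lia⟩
  obtain ⟨rfl, rfl, rfl⟩ : b = n + 1 ∧ c = n + 1 ∧ d = -n := by lia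
  obtain ⟨rfl, rfl, rfl⟩ : n = i' ∧ n = j' ∧ k' = -n := by lia
  refine ⟨![(a + 1, n + 1), (n + 1, y + 1), (x, -n)], ?_, ?_,
    pairwise_not_reachable_fin_three ?_ ?_ ?_⟩
  · simp only [Fin.forall_fin_succ, IsEmpty.forall_iff, and_true]
    refine ⟨mem_support_edgesTouching (e := ((a + 1, n), true)) (.inr ⟨rfl, rfl⟩) ?_,
      mem_support_edgesTouching (e := ((n, y + 1), false)) (.inr ⟨rfl, rfl⟩) ?_,
      mem_support_edgesTouching (e := ((x, -n), true)) (.inl ⟨rfl, rfl⟩) ?_⟩ <;>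
      simp [primalBox] <;> lia
  · simpa [Fin.forall_fin_succ] using ⟨hp₁, hp₂, hp₃⟩
  · exact not_reachable_top_right (by lia) (by lia) (by lia) (by lia) hd₁ hd₂
  · exact not_reachable_top_bottom (by lia) (by lia) (by lia) (by lia) hd₁ hd₂
  · exact not_reachable_right_bottom (by lia) (by lia) (by lia) (by lia) hd₂ hd₃

end Arms

section FKG

variable {I α : Type*}

/-- The event that membership in `A` is forced by the coordinates in `F`. -/
def forcedOn (F : Finset I) (A : Set (I → α)) : Set (F → α) := {z | ∀ x, F.restrict x = z → x ∈ A}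

lemma forcedOn_inter (F : Finset I) (A B : Set (I → α)) :
    forcedOn F (A ∩ B) = forcedOn F A ∩ forcedOn F B := by
  ext z
  exact ⟨fun h => ⟨fun x hx => (h x hx).1, fun x hx => (h x hx).2⟩,
    fun h x hx => ⟨h.1 x hx, h.2 x hx⟩⟩

lemma isLowerSet_forcedOn [Preorder α] (F : Finset I) {A : Set (I → α)} (hA : IsLowerSet A) :
    IsLowerSet (forcedOn F A) := by
  classical
  rintro z w hwz hz x rfl
  refine hA (b := x) (a := fun i => if hi : i ∈ F then z ⟨i, hi⟩ else x i) ?_ (hz _ ?_)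
  · intro i
    by_cases hi : i ∈ F
    · simpa [hi] using hwz ⟨i, hi⟩
    · simp [hi]
  · ext i
    simp

lemma antitone_indicator_of_isLowerSet {β : Type*} [Preorder β] {S : Set β} (hS : IsLowerSet S) :
    Antitone (S.indicator (1 : β → ℝ)) := fun x y hxy => by
  by_cases hy : y ∈ S
  · rw [Set.indicator_of_mem hy, Set.indicator_of_mem (hS hxy hy), Pi.one_apply, Pi.one_apply]
  · rw [Set.indicator_of_notMem hy]
    exact Set.indicator_nonneg (fun _ _ => zero_le_one) _

lemma pi_real_mul_le_inter_of_isLowerSet [LinearOrder α] [Finite α] [MeasurableSpace α]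
    [MeasurableSingletonClass α] {F : Type*} [Fintype F] (m : F → Measure α)
    [∀ i, IsProbabilityMeasure (m i)] {A B : Set (F → α)} (hA : IsLowerSet A)
    (hB : IsLowerSet B) :
    (Measure.pi m).real A * (Measure.pi m).real B ≤ (Measure.pi m).real (A ∩ B) := by
  classical
  have := Fintype.ofFinite α
  set P := Measure.pi m
  have h_prod (x : F → α) : P.real {x} = ∏ i, (m i).real {x i} := by
    rw [Measure.real, Measure.pi_singleton, ENNReal.toReal_prod]
    rfl
  have h_sum (S : Set (F → α)) : ∑ x, P.real {x} * S.indicator 1 x = P.real S := by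
    rw [← S.coe_toFinset, ← sum_measureReal_singleton, S.coe_toFinset]
    simp only [Set.indicator_apply, Pi.one_apply, mul_ite, mul_one, mul_zero, Finset.sum_ite,
      Finset.sum_const_zero, add_zero, Set.filter_mem_univ_eq_toFinset]
  have h_fkg := fkg (α := (F → α)ᵒᵈ) (μ := fun x => P.real {x.ofDual})
    (f := fun x => A.indicator 1 x.ofDual) (g := fun x => B.indicator 1 x.ofDual)
    (fun _ => measureReal_nonneg) (fun _ => Set.indicator_nonneg (fun _ _ => zero_le_one) _)
    (fun _ => Set.indicator_nonneg (fun _ _ => zero_le_one) _)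
    (antitone_indicator_of_isLowerSet hA).dual_left
    (antitone_indicator_of_isLowerSet hB).dual_left fun x y => by
      simp only [h_prod, ← Finset.prod_mul_distrib]
      refine le_of_eq (Finset.prod_congr rfl fun i _ => ?_)
      change _ = (m i).real {x.ofDual i ⊔ y.ofDual i} * (m i).real {x.ofDual i ⊓ y.ofDual i}
      rcases le_total (x.ofDual i) (y.ofDual i) with h | h <;> simp [h, mul_comm]
  have h_univ : ∑ x, P.real {x} = 1 := by
    simpa only [Set.indicator_univ, Pi.one_apply, mul_one, probReal_univ] using h_sum Set.univ
  have h_inter (x : F → α) :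
      A.indicator (1 : (F → α) → ℝ) x * B.indicator 1 x = (A ∩ B).indicator 1 x := by
    rw [← Set.inter_indicator_mul]
    simp only [Pi.one_apply, mul_one]
    rfl
  rw [← h_sum A, ← h_sum B, ← h_sum (A ∩ B), ← one_mul (∑ x, _ * (A ∩ B).indicator _ x), ← h_univ]
  simp only [← h_inter]
  exact h_fkg

variable [Finite α] [MeasurableSpace α] [MeasurableSingletonClass α] [Countable I]
  [TopologicalSpace α] (m : I → Measure α) [∀ i, IsProbabilityMeasure (m i)]

lemma tendsto_pi_real_forcedOn {A : Set (I → α)} (hA : IsOpen A) :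
    Filter.Tendsto (fun F : Finset I => (Measure.pi fun i : F => m i).real (forcedOn F A))
      Filter.atTop (nhds ((Measure.infinitePi m).real A)) := by
  have h_mono : Monotone fun F : Finset I => (F.restrict : (I → α) → F → α) ⁻¹' forcedOn F A :=
    fun F G hFG x hx y hy => hx y (funext fun i => congr_fun hy ⟨i, hFG i.2⟩)
  have h_union : ⋃ F : Finset I, (F.restrict : (I → α) → F → α) ⁻¹' forcedOn F A = A := by
    refine subset_antisymm (Set.iUnion_subset fun F x hx => hx x rfl) fun x hx => ?_
    obtain ⟨F, u, hu, hF⟩ := isOpen_pi_iff.1 hA x hx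
    refine Set.mem_iUnion.2 ⟨F, fun y hy => hF fun i hi => ?_⟩
    rw [show y i = x i from congr_fun hy ⟨i, hi⟩]
    exact (hu i hi).2
  have h_lim := (ENNReal.tendsto_toReal (measure_ne_top _ _)).comp
    (tendsto_measure_iUnion_atTop (μ := Measure.infinitePi m) h_mono)
  rw [h_union] at h_lim
  refine h_lim.congr fun F => ?_
  rw [Measure.real, ← Measure.infinitePi_map_restrict,
    Measure.map_apply (Finset.measurable_restrict F) (Set.toFinite _).measurableSet]
  rfl

variable [LinearOrder α]

theorem infinitePi_real_mul_le_inter {A B : Set (I → α)} (hA : IsOpen A) (hA' : IsLowerSet A)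
    (hB : IsOpen B) (hB' : IsLowerSet B) :
    (Measure.infinitePi m).real A * (Measure.infinitePi m).real B ≤
      (Measure.infinitePi m).real (A ∩ B) := by
  refine le_of_tendsto_of_tendsto' ((tendsto_pi_real_forcedOn m hA).mul
    (tendsto_pi_real_forcedOn m hB)) (tendsto_pi_real_forcedOn m (hA.inter hB)) fun F => ?_
  rw [forcedOn_inter]
  exact pi_real_mul_le_inter_of_isLowerSet _ (isLowerSet_forcedOn F hA') (isLowerSet_forcedOn F hB')

theorem prod_infinitePi_real_le_biInter {ι : Type*} (T : Finset ι) {A : ι → Set (I → α)}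
    (hA : ∀ i ∈ T, IsOpen (A i)) (hA' : ∀ i ∈ T, IsLowerSet (A i)) :
    ∏ i ∈ T, (Measure.infinitePi m).real (A i) ≤
      (Measure.infinitePi m).real (⋂ i ∈ T, A i) := by
  classical
  induction T using Finset.induction_on with
  | empty => simp
  | insert a T ha ih =>
    rw [Finset.forall_mem_insert] at hA hA'
    rw [Finset.prod_insert ha, Finset.set_biInter_insert]
    refine (mul_le_mul_of_nonneg_left (ih hA.2 hA'.2) measureReal_nonneg).trans
      (infinitePi_real_mul_le_inter m hA.1 hA'.1 (isOpen_biInter_finset hA.2)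
        (isLowerSet_iInter₂ hA'.2))

end FKG

section Invariance

variable (g : LatticeAut) {A S : Set V} {E O : Set Edge}

namespace LatticeAut

lemma edge_preimage_edgesTouching :
    g.edge ⁻¹' edgesTouching A = edgesTouching (g.vertex ⁻¹' A) := by
  ext e
  rcases (g.ends_iff e _ _).2 (ends_src_tgt e) with ⟨h, h'⟩ | ⟨h, h'⟩
  · simp [edgesTouching, h, h']
  · simp [edgesTouching, h, h', or_comm]

lemma edge_preimage_edgesWithin : g.edge ⁻¹' edgesWithin A = edgesWithin (g.vertex ⁻¹' A) := by
  ext e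
  rcases (g.ends_iff e _ _).2 (ends_src_tgt e) with ⟨h, h'⟩ | ⟨h, h'⟩
  · simp [edgesWithin, h, h']
  · simp [edgesWithin, h, h', and_comm]

lemma hasArm_preimage_iff (hE : g.edge ⁻¹' E = E) :
    HasArm E (g.vertex ⁻¹' S) (g.edge ⁻¹' O) ↔ HasArm E S O := by
  refine ⟨fun ⟨v, hv, hi⟩ => ⟨g.vertex v, hv, g.infinite_cluster_iff.2 ?_⟩, fun ⟨v, hv, hi⟩ =>
    ⟨g.vertex.symm v, by simpa, ?_⟩⟩
  · rwa [Set.preimage_sdiff, hE]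
  · nth_rw 1 [← hE]
    rw [← Set.preimage_sdiff, ← g.infinite_cluster_iff]
    simpa

end LatticeAut

lemma squareSymmetry_vertex_preimage_Icc {a b c : ℤ} (h : a + b = c) (k : Bool × Bool × Bool) :
    (squareSymmetry c k).vertex ⁻¹' Set.Icc (a, a) (b, b) = Set.Icc (a, a) (b, b) := by
  subst h
  ext ⟨x, y⟩
  obtain ⟨_ | _, _ | _, _ | _⟩ := k <;>
    simp [squareSymmetry_vertex, Prod.le_def] <;> lia

lemma squareSymmetry_edge_preimage_primal (n : ℤ) (k : Bool × Bool × Bool) :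
    (squareSymmetry 1 k).edge ⁻¹' edgesTouching (primalBox n) = edgesTouching (primalBox n) := by
  rw [LatticeAut.edge_preimage_edgesTouching, primalBox,
    squareSymmetry_vertex_preimage_Icc (by lia)]

lemma squareSymmetry_edge_preimage_dual (n : ℤ) (k : Bool × Bool × Bool) :
    (squareSymmetry 0 k).edge ⁻¹' edgesWithin (dualBox n) = edgesWithin (dualBox n) := by
  rw [LatticeAut.edge_preimage_edgesWithin, dualBox, squareSymmetry_vertex_preimage_Icc (by lia)]

lemma finite_halfSide (c n : ℤ) (k : Bool × Bool × Bool) : (halfSide c n k).Finite :=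
  (Set.finite_Icc _ _).preimage (squareSymmetry c k).vertex.injective.injOn

end Invariance

section Covering

variable {n : ℤ} {O : Set Edge}

lemma exists_mem_halfSide {c x y : ℤ} (hc : c ≤ 1)
    (h : (c - n ≤ x ∧ x ≤ n) ∧ (y = -n ∨ y = n + c) ∨ (c - n ≤ y ∧ y ≤ n) ∧ (x = -n ∨ x = n + c)) :
    ∃ k, ((x, y) : V) ∈ halfSide c n k := by
  simp only [halfSide, Set.mem_preimage, squareSymmetry_vertex, Set.mem_Icc]
  rcases h with h | h
  · refine ⟨(decide (x < c), decide (y = -n), false), ?_⟩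
    by_cases hx : x < c <;> by_cases hy : y = -n <;> simp [hx, hy] <;> lia
  · refine ⟨(decide (y < c), decide (x = -n), true), ?_⟩
    by_cases hx : y < c <;> by_cases hy : x = -n <;> simp [hx, hy] <;> lia

lemma finite_support_edgesTouching {A : Set V} (hA : A.Finite) :
    (openGraph (edgesTouching A)).support.Finite := by
  refine (((finite_edgesTouching hA).image src).union
    ((finite_edgesTouching hA).image tgt)).subset ?_
  rintro _ ⟨_, e, he, ⟨rfl, -⟩ | ⟨-, rfl⟩⟩
  exacts [.inl ⟨e, he, rfl⟩, .inr ⟨e, he, rfl⟩]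

lemma exists_hasArm_primal {v : V} (hv : v ∈ primalBox n) (hi : (cluster O v).Infinite) :
    ∃ k, HasArm (edgesTouching (primalBox n)) (halfSide 1 n k) O := by
  have hv' : v ∈ (openGraph (edgesTouching (primalBox n))).support :=
    ⟨tgt (v, false), (v, false), .inl hv, ends_src_tgt _⟩
  obtain ⟨w, ⟨z, e, he, h⟩, hi⟩ :=
    exists_infinite_cluster_sdiff (finite_support_edgesTouching (Set.finite_Icc _ _)) .rfl hv' hi
  obtain ⟨e', he', z', h'⟩ := exists_ends_of_infinite_cluster hi
  have hw : w ∉ primalBox n := fun hw => he'.2 (h'.symm.mem_edgesTouching hw)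
  obtain ⟨k, hk⟩ := exists_mem_halfSide (c := 1) (n := n) (x := w.1) (y := w.2) le_rfl (by
    obtain ⟨⟨i, j⟩, _ | _⟩ := e <;> rcases h with ⟨rfl, rfl⟩ | ⟨rfl, rfl⟩ <;>
      simp only [edgesTouching, primalBox, src_mk, tgt_true, tgt_false, Set.mem_ofPred_eq,
        Set.mem_Icc, Prod.mk_le_mk] at he hw ⊢ <;> lia)
  exact ⟨k, w, hk, hi⟩

lemma exists_hasArm_dual {v : V} (hv : v ∈ primalBox n) (hi : (cluster O v).Infinite) :
    ∃ k, HasArm (edgesWithin (dualBox n)) (halfSide 0 n k) O := by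
  have h_support : (openGraph (edgesWithin (dualBox n))).support ⊆ dualBox n := by
    rintro _ ⟨_, e, he, ⟨rfl, -⟩ | ⟨-, rfl⟩⟩
    exacts [he.1, he.2]
  have hv' : v ∈ dualBox n := Set.Icc_subset_Icc_left (by simp [Prod.mk_le_mk]) hv
  obtain ⟨w, hw, hi⟩ := exists_infinite_cluster_sdiff (Set.finite_Icc _ _) h_support hv' hi
  obtain ⟨e, he, z, h⟩ := exists_ends_of_infinite_cluster hi
  obtain ⟨k, hk⟩ := exists_mem_halfSide (c := 0) (n := n) (x := w.1) (y := w.2) zero_le_one (by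
    have he' := he.2
    obtain ⟨⟨i, j⟩, _ | _⟩ := e <;> rcases h with ⟨rfl, rfl⟩ | ⟨rfl, rfl⟩ <;>
      simp only [edgesWithin, dualBox, src_mk, tgt_true, tgt_false, Set.mem_ofPred_eq,
        Set.mem_Icc, Prod.mk_le_mk] at he' hw ⊢ <;> omega)
  exact ⟨k, w, hk, hi⟩

end Covering

section Percolation

/-- The open edges of a percolation configuration. -/
def openEdges (a : Edge → Bool) : Set Edge := {e | a e = true}

/-- Bond percolation on the square lattice: the states of the edges are independent with
law `μ`. -/
noncomputable abbrev percolation (μ : Measure Bool) : Measure (Edge → Bool) :=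
  Measure.infinitePi fun _ => μ

section Topology

open Topology

variable {O : Set Edge} {S : Set V} {v : V}

lemma openEdges_mono {a b : Edge → Bool} (h : a ≤ b) : openEdges a ⊆ openEdges b :=
  fun e he => top_le_iff.1 (he.symm.trans_le (h e))

lemma eventually_nhds_eq_on {F : Set Edge} (hF : F.Finite) (a : Edge → Bool) :
    ∀ᶠ b in 𝓝 a, ∀ e ∈ F, b e = a e :=
  (Filter.eventually_all_finite hF).2 fun e _ =>
    (continuous_apply e).continuousAt.preimage_mem_nhds ((isOpen_discrete {a e}).mem_nhds rfl)

lemma isOpen_reachable (E : Set Edge) (u v : V) :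
    IsOpen {a | (openGraph (openEdges a \ E)).Reachable u v} := by
  rw [isOpen_iff_eventually]
  rintro a ⟨p⟩
  induction p with
  | nil => exact .of_forall fun _ => .refl _
  | cons h _ ih =>
    obtain ⟨e, he, h_ends⟩ := h
    filter_upwards [ih, eventually_nhds_eq_on (Set.finite_singleton e) a] with b hb hbe
    have hbe : e ∈ openEdges b \ E := ⟨(hbe e rfl).trans he.1, he.2⟩
    exact (reachable_of_ends hbe h_ends).trans hb

lemma cluster_subset_of_inter_edgesTouching_subset {O' : Set Edge}
    (h : O' ∩ edgesTouching (cluster O v) ⊆ O) : cluster O' v ⊆ cluster O v := by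
  intro w hw
  rw [cluster, Set.mem_ofPred_eq, SimpleGraph.reachable_iff_reflTransGen] at hw
  induction hw with
  | refl => exact .refl _
  | tail _ h_adj ih =>
    obtain ⟨e, he, h_ends⟩ := h_adj
    exact SimpleGraph.Reachable.trans ih
      (reachable_of_ends (h ⟨he, h_ends.symm.mem_edgesTouching ih⟩) h_ends)

lemma isOpen_finite_cluster (E : Set Edge) (v : V) :
    IsOpen {a | (cluster (openEdges a \ E) v).Finite} := by
  refine isOpen_iff_eventually.2 fun a ha => ?_
  filter_upwards [eventually_nhds_eq_on (finite_edgesTouching ha) a] with b hb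
  refine Set.Finite.subset ha (cluster_subset_of_inter_edgesTouching_subset ?_)
  exact fun e he => ⟨(hb e he.2).symm.trans he.1.1, he.1.2⟩

lemma isOpen_not_hasArm (hS : S.Finite) (E : Set Edge) :
    IsOpen {a | ¬ HasArm E S (openEdges a)} := by
  simp only [HasArm, not_exists, not_and, Set.not_infinite, Set.ofPred_forall]
  exact hS.isOpen_biInter fun v _ => isOpen_finite_cluster E v

lemma isLowerSet_not_hasArm (E : Set Edge) (S : Set V) :
    IsLowerSet {a | ¬ HasArm E S (openEdges a)} := fun _ _ hba ha ⟨v, hv, hi⟩ =>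
  ha ⟨v, hv, hi.mono (cluster_mono (Set.sdiff_subset_sdiff_left (openEdges_mono hba)))⟩

lemma measurableSet_exists_infinite_cluster (B : Set V) :
    MeasurableSet {a | ∃ v ∈ B, (cluster (openEdges a) v).Infinite} := by
  have h_open (v : V) := isOpen_finite_cluster ∅ v
  simp only [Set.sdiff_empty] at h_open
  simp only [Set.ofPred_exists, Set.ofPred_and]
  exact .iUnion fun v => (MeasurableSet.const _).inter (h_open v).measurableSet.compl

end Topology

variable (μ : Measure Bool) [IsProbabilityMeasure μ]

lemma measureReal_not_hasArm_halfSide {c n : ℤ} {E : Set Edge}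
    (hE : ∀ k, (squareSymmetry c k).edge ⁻¹' E = E) (k : Bool × Bool × Bool) :
    (percolation μ).real {a | ¬ HasArm E (halfSide c n k) (openEdges a)} =
      (percolation μ).real {a | ¬ HasArm E (Set.Icc (c, n + c) (n, n + c)) (openEdges a)} := by
  have h_mp := measurePreserving_comp_infinitePi (fun _ : Edge => μ)
    (squareSymmetry c k).edge.injective fun _ => rfl
  have h_meas := (isOpen_not_hasArm (finite_halfSide c n k) E).measurableSet
  rw [measureReal_def, ← h_mp.measure_preimage h_meas.nullMeasurableSet]
  exact congrArg _ (congrArg _ (Set.ext fun a =>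
    not_congr ((squareSymmetry c k).hasArm_preimage_iff (O := openEdges a) (hE k))))

lemma measureReal_not_hasArm_pow_le {c n : ℤ} {E : Set Edge} {B : Set V}
    (hE : ∀ k, (squareSymmetry c k).edge ⁻¹' E = E)
    (hB : ∀ O : Set Edge, ∀ v ∈ B, (cluster O v).Infinite → ∃ k, HasArm E (halfSide c n k) O)
    (k : Bool × Bool × Bool) :
    (percolation μ).real {a | ¬ HasArm E (halfSide c n k) (openEdges a)} ^ 8 ≤
      (percolation μ).real {a | ∃ v ∈ B, (cluster (openEdges a) v).Infinite}ᶜ := by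
  calc _ = ∏ k, (percolation μ).real {a | ¬ HasArm E (halfSide c n k) (openEdges a)} := by
        simp [measureReal_not_hasArm_halfSide μ hE]
    _ ≤ (percolation μ).real (⋂ k ∈ Finset.univ, {a | ¬ HasArm E (halfSide c n k) (openEdges a)}) :=
        prod_infinitePi_real_le_biInter _ _
          (fun k _ => isOpen_not_hasArm (finite_halfSide c n k) E)
          fun k _ => isLowerSet_not_hasArm E _
    _ ≤ _ := by
        refine measureReal_mono fun a ha ⟨v, hv, hi⟩ => ?_
        obtain ⟨k, hk⟩ := hB _ v hv hi
        exact Set.mem_iInter₂.1 ha k (Finset.mem_univ k) hk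

lemma tendsto_measureReal_primalBox_infinite_cluster
    (h : ∀ᵐ a ∂percolation μ, ∃ v, (cluster (openEdges a) v).Infinite) :
    Filter.Tendsto (fun n : ℕ => (percolation μ).real
      {a | ∃ v ∈ primalBox n, (cluster (openEdges a) v).Infinite}ᶜ) Filter.atTop (nhds 0) := by
  have h_anti : Antitone fun n : ℕ =>
      {a | ∃ v ∈ primalBox n, (cluster (openEdges a) v).Infinite}ᶜ := by
    refine fun n m hnm => Set.compl_subset_compl.2 fun a ⟨v, hv, hi⟩ =>
      ⟨v, Set.Icc_subset_Icc ?_ ?_ hv, hi⟩ <;> simp [Prod.mk_le_mk] <;> lia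
  have h_lim := tendsto_measure_iInter_atTop (μ := percolation μ) (fun n : ℕ =>
    (measurableSet_exists_infinite_cluster (primalBox n)).compl.nullMeasurableSet)
    h_anti ⟨0, measure_ne_top _ _⟩
  have h_null : percolation μ
      (⋂ n : ℕ, {a | ∃ v ∈ primalBox n, (cluster (openEdges a) v).Infinite}ᶜ) = 0 := by
    refine measure_mono_null (fun a ha => ?_) (ae_iff.1 h)
    rintro ⟨v, hv⟩
    refine Set.mem_iInter.1 ha (v.1.natAbs + v.2.natAbs + 1) ⟨v, ?_, hv⟩
    simp only [primalBox, Set.mem_Icc, Prod.le_def]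
    lia
  rw [h_null] at h_lim
  exact (ENNReal.tendsto_toReal ENNReal.zero_ne_top).comp h_lim

lemma eventually_measureReal_not_hasArm_lt
    (h : ∀ᵐ a ∂percolation μ, ∃ v, (cluster (openEdges a) v).Infinite) {ε : ℝ} (hε : 0 < ε) :
    ∀ᶠ n : ℕ in Filter.atTop, ∀ k,
      (percolation μ).real
        {a | ¬ HasArm (edgesTouching (primalBox n)) (halfSide 1 n k) (openEdges a)} < ε ∧
      (percolation μ).real
        {a | ¬ HasArm (edgesWithin (dualBox n)) (halfSide 0 n k) (openEdges a)} < ε := by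
  filter_upwards [(tendsto_measureReal_primalBox_infinite_cluster μ h).eventually_lt_const
    (pow_pos hε 8)] with n hn k
  exact ⟨lt_of_pow_lt_pow_left₀ 8 hε.le ((measureReal_not_hasArm_pow_le μ
      (squareSymmetry_edge_preimage_primal n) (fun _ _ => exists_hasArm_primal) k).trans_lt hn),
    lt_of_pow_lt_pow_left₀ 8 hε.le ((measureReal_not_hasArm_pow_le μ
      (squareSymmetry_edge_preimage_dual n) (fun _ _ => exists_hasArm_dual) k).trans_lt hn)⟩

lemma ae_finite_cluster_or_ae_exists_infinite_cluster :
    (∀ᵐ a ∂percolation μ, ∀ v, (cluster (openEdges a) v).Finite) ∨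
      ∀ᵐ a ∂percolation μ, ∃ v, (cluster (openEdges a) v).Infinite := by
  let T : (Edge → Bool) → Edge → Bool := fun a e => a ((translation (1, 0)).edge e)
  have h_iterate : ∀ (m : ℕ) (e : Edge), ((translation (1, 0)).edge^[m] e).1.1 = e.1.1 + m := by
    intro m
    induction m with
    | zero => simp
    | succ m ih => intro e; rw [Function.iterate_succ_apply, ih]; simp [translation]; lia
  have h_ergodic : Ergodic T (percolation μ) :=
    ergodic_comp_infinitePi _ (translation (1, 0)).edge.injective (fun _ => rfl)
      fun e ⟨m, hm, he⟩ => by have := h_iterate m e; rw [he] at this; lia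
  let A : Set (Edge → Bool) := {a | ∃ v ∈ Set.univ, (cluster (openEdges a) v).Infinite}
  have hA : MeasurableSet A := measurableSet_exists_infinite_cluster Set.univ
  have h_inv : T ⁻¹' A = A := by
    ext a
    exact (translation (1, 0)).vertex.exists_congr fun v => and_congr_right fun _ =>
      ((translation (1, 0)).infinite_cluster_iff (O := openEdges a)).symm
  rcases h_ergodic.ae_mem_or_ae_notMem hA h_inv with h | h
  · exact .inr (h.mono fun a ⟨v, _, hv⟩ => ⟨v, hv⟩)
  · exact .inl (h.mono fun a ha v => Set.not_infinite.1 fun hv => ha ⟨v, trivial, hv⟩)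

end Percolation

section Coupling

lemma measure_false_eq_one_sub (μ : Measure Bool) [IsProbabilityMeasure μ] :
    μ {false} = 1 - μ {true} := by
  rw [← prob_compl_eq_one_sub (measurableSet_singleton _)]
  congr
  ext b
  simp

lemma ext_of_measure_true {μ ν : Measure Bool} [IsProbabilityMeasure μ] [IsProbabilityMeasure ν]
    (h : μ {true} = ν {true}) : μ = ν :=
  Measure.ext_of_singleton fun
    | true => h
    | false => by rw [measure_false_eq_one_sub, measure_false_eq_one_sub, h]

lemma measurable_decide_lt (t : unitInterval) :
    Measurable fun x : unitInterval => decide (x < t) :=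
  measurable_to_bool (by simpa [Set.preimage] using (measurableSet_Iio (a := t)).mem)

lemma map_decide_lt_volume_unitInterval (μ : Measure Bool) [IsProbabilityMeasure μ]
    {t : unitInterval} (ht : (t : ℝ) = μ.real {true}) :
    volume.map (fun x => decide (x < t)) = μ := by
  have := Measure.isProbabilityMeasure_map (measurable_decide_lt t).aemeasurable (μ := volume)
  refine ext_of_measure_true ?_
  rw [Measure.map_apply (measurable_decide_lt t) (measurableSet_singleton _)]
  calc volume ((fun x => decide (x < t)) ⁻¹' {true}) = volume (Set.Iio t) := by
        congr; ext x; simp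
    _ = μ {true} := by rw [unitInterval.volume_Iio, ht, ofReal_measureReal]

lemma ae_percolation_exists_infinite_cluster_of_le {μ ν : Measure Bool} [IsProbabilityMeasure μ]
    [IsProbabilityMeasure ν] (hle : μ {true} ≤ ν {true})
    (h : ∀ᵐ a ∂percolation μ, ∃ v, (cluster (openEdges a) v).Infinite) :
    ∀ᵐ a ∂percolation ν, ∃ v, (cluster (openEdges a) v).Infinite := by
  let s : unitInterval := ⟨μ.real {true}, measureReal_nonneg, measureReal_le_one⟩
  let t : unitInterval := ⟨ν.real {true}, measureReal_nonneg, measureReal_le_one⟩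
  have hst : s ≤ t := ENNReal.toReal_mono (measure_ne_top _ _) hle
  let threshold (x : unitInterval) (w : Edge → unitInterval) (e : Edge) : Bool := decide (w e < x)
  have h_meas (x : unitInterval) : AEMeasurable (threshold x)
      (Measure.infinitePi fun _ : Edge => volume) :=
    (measurable_pi_lambda _ fun e =>
      (measurable_decide_lt x).comp (measurable_pi_apply e)).aemeasurable
  have h_law (ρ : Measure Bool) [IsProbabilityMeasure ρ] (x : unitInterval)
      (hx : (x : ℝ) = ρ.real {true}) :
      (Measure.infinitePi fun _ : Edge => volume).map (threshold x) = percolation ρ := by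
    rw [Measure.infinitePi_map_pi (μ := fun _ : Edge => volume) fun _ => measurable_decide_lt x]
    simp only [map_decide_lt_volume_unitInterval ρ hx]
  have h_event := measurableSet_exists_infinite_cluster Set.univ
  simp only [Set.mem_univ, true_and] at h_event
  rw [← h_law μ s rfl, ae_map_iff (h_meas s) h_event] at h
  rw [← h_law ν t rfl, ae_map_iff (h_meas t) h_event]
  refine h.mono fun w ⟨v, hv⟩ => ⟨v, hv.mono (cluster_mono fun e he => ?_)⟩
  exact decide_eq_true ((of_decide_eq_true he).trans_le hst)

lemma measurePreserving_dual (μ : Measure Bool) [IsProbabilityMeasure μ] :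
    MeasurePreserving (fun (a : Edge → Bool) e => !a (cross e)) (percolation μ)
      (percolation (μ.map not)) := by
  have h_not : Measurable not := measurable_of_finite _
  have h_cross : MeasurePreserving (fun (a : Edge → Bool) e => a (cross e))
      (percolation μ) (percolation μ) :=
    measurePreserving_comp_infinitePi _ cross_injective fun _ => rfl
  have h_flip : MeasurePreserving (fun (a : Edge → Bool) e => !a e)
      (percolation μ) (percolation (μ.map not)) :=
    ⟨by fun_prop, Measure.infinitePi_map_pi (μ := fun _ : Edge => μ) fun _ => h_not⟩
  exact h_flip.comp h_cross

end Coupling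

section Resampling

variable {I : Type*} {X : I → Type*} [∀ i, MeasurableSpace (X i)] (m : ∀ i, Measure (X i))
  [∀ i, IsProbabilityMeasure (m i)]

lemma measurePreserving_piecewise_infinitePi (s : Set I) [DecidablePred (· ∈ s)] :
    MeasurePreserving (fun x : (∀ i, X i) × (∀ i, X i) => s.piecewise x.1 x.2)
      ((Measure.infinitePi m).prod (Measure.infinitePi m)) (Measure.infinitePi m) := by
  have h_meas : Measurable fun x : (∀ i, X i) × (∀ i, X i) => s.piecewise x.1 x.2 := by
    refine measurable_pi_lambda _ fun i => ?_
    by_cases hi : i ∈ s <;> simp only [hi, Set.piecewise, if_true, if_false] <;> fun_prop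
  refine ⟨h_meas, Measure.eq_infinitePi m fun S t ht => ?_⟩
  have h_preimage : (fun x : (∀ i, X i) × (∀ i, X i) => s.piecewise x.1 x.2) ⁻¹' (Set.pi S t) =
      (Set.pi ↑(S.filter (· ∈ s)) t) ×ˢ (Set.pi ↑(S.filter (· ∉ s)) t) := by
    ext x
    simp only [Set.mem_preimage, Set.mem_pi, Set.mem_prod, Finset.mem_coe, Finset.mem_filter,
      and_imp, Set.piecewise]
    grind
  rw [Measure.map_apply h_meas (.pi S.countable_toSet fun i _ => ht i), h_preimage,
    Measure.prod_prod, Measure.infinitePi_pi m fun i _ => ht i,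
    Measure.infinitePi_pi m fun i _ => ht i, Finset.prod_filter_mul_prod_filter_not]

lemma infinitePi_inter_pi_of_dependsOn {A : Set (∀ i, X i)} (hA : MeasurableSet A)
    {F : Finset I} (h_dep : DependsOn (· ∈ A) (F : Set I)ᶜ) {t : ∀ i, Set (X i)}
    (ht : ∀ i ∈ F, MeasurableSet (t i)) :
    Measure.infinitePi m (A ∩ (F : Set I).pi t) =
      Measure.infinitePi m A * ∏ i ∈ F, m i (t i) := by
  classical
  have h_meas : MeasurableSet (A ∩ (F : Set I).pi t) := hA.inter (.pi F.countable_toSet ht)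
  rw [← (measurePreserving_piecewise_infinitePi m (F : Set I)).measure_preimage
    h_meas.nullMeasurableSet, mul_comm, ← Measure.infinitePi_pi m ht, ← Measure.prod_prod]
  refine congrArg _ (Set.ext fun x => ?_)
  have h_mem : (F : Set I).piecewise x.1 x.2 ∈ A ↔ x.2 ∈ A :=
    iff_of_eq (h_dep fun i hi => Set.piecewise_eq_of_notMem _ _ _ hi)
  have h_pi : (F : Set I).piecewise x.1 x.2 ∈ (F : Set I).pi t ↔ x.1 ∈ (F : Set I).pi t :=
    forall₂_congr fun i hi => by rw [Set.piecewise_eq_of_mem _ _ _ hi]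
  rw [Set.mem_preimage, Set.mem_inter_iff, h_mem, h_pi, Set.mem_prod, and_comm]

lemma sum_measure_le_of_card_le {ι Ω : Type*} [MeasurableSpace Ω] (P : Measure Ω)
    [IsProbabilityMeasure P] {A : ι → Set Ω} (hA : ∀ t, MeasurableSet (A t)) {R : Finset ι} {N : ℕ}
    (h : ∀ ω, ∀ T ⊆ R, (∀ t ∈ T, ω ∈ A t) → T.card ≤ N) : ∑ t ∈ R, P (A t) ≤ N := by
  classical
  calc ∑ t ∈ R, P (A t) = ∫⁻ ω, ∑ t ∈ R, (A t).indicator 1 ω ∂P := by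
        rw [lintegral_finsetSum _ fun t _ => measurable_one.indicator (hA t)]
        exact Finset.sum_congr rfl fun t _ => (lintegral_indicator_one (hA t)).symm
    _ ≤ ∫⁻ _, N ∂P := by
        refine lintegral_mono fun ω => ?_
        simp only [Set.indicator_apply, Pi.one_apply, Finset.sum_boole]
        exact Nat.cast_le.2
          (h ω _ (Finset.filter_subset _ _) fun t ht => (Finset.mem_filter.1 ht).2)
    _ = N := by simp

end Resampling

section Trifurcations

lemma exists_reachable_box {M : ℕ} {O : Set Edge} {v : V} (hv : v ∈ dualBox M)
    (hi : (cluster O v).Infinite) :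
    ∃ s ∈ (Finset.box M : Finset V), (openGraph O).Reachable v s := by
  by_contra! h
  refine hi ((Set.finite_Icc ((-M, -M) : V) (M, M)).subset fun w hw => ?_)
  rw [cluster, Set.mem_ofPred_eq, SimpleGraph.reachable_iff_reflTransGen] at hw
  induction hw with
  | refl => exact hv
  | @tail b c hb h_adj ih =>
    have h_interior : b ∉ (Finset.box M : Finset V) := fun hb' =>
      h b hb' ((SimpleGraph.reachable_iff_reflTransGen _ _).2 hb)
    obtain ⟨⟨⟨i, j⟩, _ | _⟩, -, ⟨rfl, rfl⟩ | ⟨rfl, rfl⟩⟩ := h_adj <;>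
      simp only [Int.mem_box, Set.mem_Icc, Prod.le_def, src_mk, tgt_true, tgt_false]
        at ih h_interior ⊢ <;> lia

variable {n : ℤ}

lemma reachable_edgesTouching_primalBox {u v : V}
    (hu : u ∈ (openGraph (edgesTouching (primalBox n))).support)
    (hv : v ∈ (openGraph (edgesTouching (primalBox n))).support) :
    (openGraph (edgesTouching (primalBox n))).Reachable u v := by
  have h_box : ∀ u ∈ (openGraph (edgesTouching (primalBox n))).support,
      ∃ w ∈ primalBox n, (openGraph (edgesTouching (primalBox n))).Reachable u w := by
    rintro u ⟨z, e, he, h⟩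
    have h_adj := reachable_of_ends he h
    rcases he with he | he <;> obtain ⟨rfl, rfl⟩ | ⟨rfl, rfl⟩ := h
    exacts [⟨_, he, .rfl⟩, ⟨_, he, h_adj⟩, ⟨_, he, h_adj⟩, ⟨_, he, .rfl⟩]
  obtain ⟨u', hu', h_u⟩ := h_box u hu
  obtain ⟨v', hv', h_v⟩ := h_box v hv
  exact h_u.trans ((reachable_of_edgesWithin_Icc_subset (edgesWithin_subset_edgesTouching _)
    hu' hv').trans h_v.symm)

lemma isTrifurcation_of_hasThreeArms (g : LatticeAut) {O : Set Edge} {S : Finset V}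
    (hO : edgesTouching (primalBox n) ⊆ g.edge ⁻¹' O) (h : HasThreeArms n (g.edge ⁻¹' O))
    (hS : ∀ v ∈ (openGraph (edgesTouching (primalBox n))).support, ∀ O' : Set Edge,
      (cluster O' (g.vertex v)).Infinite → ∃ s ∈ S, (openGraph O').Reachable (g.vertex v) s) :
    IsTrifurcation (openGraph O) (openGraph (g.edge '' edgesTouching (primalBox n)))
      (g.vertex '' (openGraph (edgesTouching (primalBox n))).support) S := by
  obtain ⟨x, hx, hi, h_sep⟩ := h
  have h_preimage := g.edge.preimage_image (edgesTouching (primalBox n))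
  refine ⟨openGraph_mono (Set.image_subset_iff.2 hO), ?_, ?_,
    fun i => g.vertex (x i), fun i => ⟨_, hx i, rfl⟩, fun i j hij => ?_, fun i => ?_⟩
  · rintro _ ⟨z, e, he, h_ends⟩
    refine ⟨g.vertex.symm _, ⟨g.vertex.symm z, g.edge.symm e, ?_, ?_⟩, g.vertex.apply_symm_apply _⟩
    · rwa [Set.mem_image_equiv] at he
    · rwa [← g.ends_iff, Equiv.apply_symm_apply, Equiv.apply_symm_apply, Equiv.apply_symm_apply]
  · rintro _ ⟨u, hu, rfl⟩ _ ⟨v, hv, rfl⟩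
    rw [g.reachable_iff, h_preimage]
    exact reachable_edgesTouching_primalBox hu hv
  · change ¬ (openGraph O \ _).Reachable (g.vertex (x i)) (g.vertex (x j))
    rw [← openGraph_sdiff, g.reachable_iff, Set.preimage_sdiff, h_preimage]
    exact h_sep hij
  · rw [← openGraph_sdiff]
    refine hS _ (hx i) _ ?_
    rw [g.infinite_cluster_iff, Set.preimage_sdiff, h_preimage]
    exact hi i

end Trifurcations

section Harris

variable (μ : Measure Bool) [IsProbabilityMeasure μ]

/-- All edges touching the box are open, and at least three distinct infinite clusters would remain
if they were closed. -/
def IsTrifurcationBox (n : ℤ) (O : Set Edge) : Prop :=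
  edgesTouching (primalBox n) ⊆ O ∧ HasThreeArms n O

lemma measurableSet_hasThreeArms (n : ℤ) : MeasurableSet {a | HasThreeArms n (openEdges a)} := by
  simp only [HasThreeArms, Pairwise, Set.ofPred_exists, Set.ofPred_and, Set.ofPred_forall]
  refine .iUnion fun x => .inter (.iInter fun _ => .const _) (.inter (.iInter fun i => ?_) ?_)
  · exact (isOpen_finite_cluster _ _).measurableSet.compl
  · refine .iInter fun i => .iInter fun j => ?_
    exact .iInter fun _ : i ≠ j => (isOpen_reachable _ _ _).measurableSet.compl

lemma measurableSet_isTrifurcationBox (n : ℤ) :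
    MeasurableSet {a | IsTrifurcationBox n (openEdges a)} :=
  .inter (.pi (finite_edgesTouching (Set.finite_Icc _ _)).countable
    fun _ _ => measurableSet_singleton true) (measurableSet_hasThreeArms n)

lemma ae_exists_infinite_cluster_map_not (hle : μ {true} ≤ μ {false})
    (h : ∀ᵐ a ∂percolation μ, ∃ v, (cluster (openEdges a) v).Infinite) :
    ∀ᵐ a ∂percolation (μ.map not), ∃ v, (cluster (openEdges a) v).Infinite := by
  have h_not : Measurable not := measurable_of_finite _
  have := Measure.isProbabilityMeasure_map (μ := μ) h_not.aemeasurable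
  refine ae_percolation_exists_infinite_cluster_of_le ?_ h
  rw [Measure.map_apply h_not (measurableSet_singleton _)]
  convert hle using 2
  ext b
  simp

lemma exists_measure_hasThreeArms_ne_zero (hle : μ {true} ≤ μ {false})
    (h : ∀ᵐ a ∂percolation μ, ∃ v, (cluster (openEdges a) v).Infinite) :
    ∃ n : ℕ, percolation μ {a | HasThreeArms n (openEdges a)} ≠ 0 := by
  have := Measure.isProbabilityMeasure_map (μ := μ) (measurable_of_finite not).aemeasurable
  obtain ⟨n, h_arm, h_arm'⟩ := ((eventually_measureReal_not_hasArm_lt μ h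
    (by norm_num : (0 : ℝ) < 1 / 16)).and (eventually_measureReal_not_hasArm_lt _
    (ae_exists_infinite_cluster_map_not μ hle h) (by norm_num : (0 : ℝ) < 1 / 16))).exists
  let A (k : Bool × Bool × Bool) : Set (Edge → Bool) :=
    {a | ¬ HasArm (edgesTouching (primalBox n)) (halfSide 1 n k) (openEdges a)}
  let B (k : Bool × Bool × Bool) : Set (Edge → Bool) :=
    {a | ¬ HasArm (edgesWithin (dualBox n)) (halfSide 0 n k) (openEdges a)}
  let dual (a : Edge → Bool) (e : Edge) : Bool := !a (cross e)
  have h_dualOpen (a : Edge → Bool) : openEdges (dual a) = dualOpen (openEdges a) := by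
    ext e
    simp [openEdges, dual, dualOpen]
  have hB (k) : (percolation μ).real (dual ⁻¹' B k) = (percolation (μ.map not)).real (B k) :=
    congrArg _ ((measurePreserving_dual μ).measure_preimage
      (isOpen_not_hasArm (finite_halfSide 0 n k) _).measurableSet.nullMeasurableSet)
  refine ⟨n, fun h_null => lt_irrefl (1 : ℝ) ?_⟩
  calc 1 = (percolation μ).real {a | HasThreeArms n (openEdges a)}ᶜ := by
        rw [probReal_compl_eq_one_sub (measurableSet_hasThreeArms n), measureReal_def, h_null,
          ENNReal.toReal_zero, sub_zero]
    _ ≤ (percolation μ).real (⋃ k, A k ∪ dual ⁻¹' B k) := by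
        refine measureReal_mono fun a ha => ?_
        by_contra h_arms
        simp only [A, B, Set.mem_iUnion, Set.mem_union, Set.mem_preimage, Set.mem_ofPred_eq,
          h_dualOpen, not_exists, not_or, not_not] at h_arms
        exact ha (.of_alternating (h_arms _).1 (h_arms _).1 (h_arms _).1
          (h_arms _).2 (h_arms _).2 (h_arms _).2)
    _ ≤ ∑ k, ((percolation μ).real (A k) + (percolation μ).real (dual ⁻¹' B k)) :=
        (measureReal_iUnion_fintype_le _).trans
          (Finset.sum_le_sum fun k _ => measureReal_union_le _ _)
    _ < ∑ _ : Bool × Bool × Bool, (1 / 16 + 1 / 16) :=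
        Finset.sum_lt_sum_of_nonempty Finset.univ_nonempty fun k _ =>
          add_lt_add (h_arm k).1 ((hB k).trans_lt (h_arm' k).2)
    _ = 1 := by norm_num

lemma measure_isTrifurcationBox_ne_zero (hμ : μ {true} ≠ 0) {n : ℤ}
    (h : percolation μ {a | HasThreeArms n (openEdges a)} ≠ 0) :
    percolation μ {a | IsTrifurcationBox n (openEdges a)} ≠ 0 := by
  have h_fin := finite_edgesTouching (A := primalBox n) (Set.finite_Icc _ _)
  have h_dep : DependsOn (· ∈ {a | HasThreeArms n (openEdges a)}) (h_fin.toFinset : Set Edge)ᶜ := by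
    intro a b hab
    have h_sdiff : openEdges a \ edgesTouching (primalBox n) =
        openEdges b \ edgesTouching (primalBox n) := by
      ext e
      refine and_congr_left fun he => ?_
      simp only [openEdges, Set.mem_ofPred_eq, hab e (by simpa using he)]
    simp only [Set.mem_ofPred_eq, HasThreeArms, h_sdiff]
  have h_eq : {a | IsTrifurcationBox n (openEdges a)} = {a | HasThreeArms n (openEdges a)} ∩
      (h_fin.toFinset : Set Edge).pi fun _ => {true} := by
    rw [h_fin.coe_toFinset, Set.inter_comm]
    rfl
  rw [h_eq, infinitePi_inter_pi_of_dependsOn _ (measurableSet_hasThreeArms n) h_dep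
    fun _ _ => measurableSet_singleton _, Finset.prod_const]
  exact mul_ne_zero h (pow_ne_zero _ hμ)

/-- Translations by the multiples of `2n + 2`, which move `primalBox n` to boxes that do not share
any touching edges. -/
def boxTranslation (n : ℕ) (t : ℕ × ℕ) : LatticeAut :=
  translation ((2 * n + 2) * t.1, (2 * n + 2) * t.2)

lemma src_mem_dualBox {n : ℤ} {e : Edge} (he : e ∈ edgesTouching (primalBox n)) :
    src e ∈ dualBox n := by
  obtain ⟨⟨i, j⟩, _ | _⟩ := e <;>
    simp only [edgesTouching, primalBox, dualBox, src_mk, tgt_true, tgt_false, Set.mem_ofPred_eq,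
      Set.mem_Icc, Prod.mk_le_mk] at he ⊢ <;> lia

lemma eq_of_abs_sub_le {n s t : ℕ} {z : ℤ} (hs : |z - (2 * n + 2) * s| ≤ n)
    (ht : |z - (2 * n + 2) * t| ≤ n) : s = t := by
  rw [abs_le] at hs ht
  by_contra hne
  rcases lt_or_gt_of_ne hne with h | h <;> nlinarith

lemma disjoint_boxTranslation (n : ℕ) {s t : ℕ × ℕ} (hst : s ≠ t) :
    Disjoint ((boxTranslation n s).edge '' edgesTouching (primalBox n))
      ((boxTranslation n t).edge '' edgesTouching (primalBox n)) := by
  rw [Set.disjoint_left]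
  rintro _ ⟨e, he, rfl⟩ ⟨e', he', h⟩
  have h_src : src e' + (((2 * n + 2) * t.1, (2 * n + 2) * t.2) : V) =
      src e + (((2 * n + 2) * s.1, (2 * n + 2) * s.2) : V) := congrArg Prod.fst h
  obtain ⟨⟨hi, hj⟩, hi', hj'⟩ := src_mem_dualBox he
  obtain ⟨⟨hk, hl⟩, hk', hl'⟩ := src_mem_dualBox he'
  simp only [Prod.ext_iff, Prod.fst_add, Prod.snd_add] at h_src
  refine hst (Prod.ext (eq_of_abs_sub_le (n := n) (z := (src e).1 + (2 * n + 2) * s.1) ?_ ?_)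
    (eq_of_abs_sub_le (n := n) (z := (src e).2 + (2 * n + 2) * s.2) ?_ ?_)) <;>
    rw [abs_le] <;> constructor <;> linarith

lemma boxTranslation_vertex_mem_dualBox {n K : ℕ} {t : ℕ × ℕ} {v : V}
    (hv : v ∈ (openGraph (edgesTouching (primalBox n))).support) (h₁ : t.1 < K) (h₂ : t.2 < K) :
    (boxTranslation n t).vertex v ∈ dualBox ((2 * n + 2) * K : ℕ) := by
  have h_mul (i : ℕ) (hi : i < K) : (2 * n + 2) * i + (2 * n + 2) ≤ (2 * n + 2) * K :=
    Nat.mul_le_mul_left _ hi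
  have h₁ := h_mul _ h₁
  have h₂ := h_mul _ h₂
  have hv : v ∈ Set.Icc ((-n, -n) : V) (n + 1, n + 1) := by
    obtain ⟨z, ⟨⟨i, j⟩, _ | _⟩, he, ⟨rfl, rfl⟩ | ⟨rfl, rfl⟩⟩ := hv <;>
      simp only [edgesTouching, primalBox, src_mk, tgt_true, tgt_false, Set.mem_ofPred_eq,
        Set.mem_Icc, Prod.mk_le_mk] at he ⊢ <;> lia
  simp only [boxTranslation, translation, dualBox, Equiv.coe_addRight, Set.mem_Icc, Prod.le_def,
    Prod.fst_add, Prod.snd_add] at hv ⊢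
  lia

lemma card_mul_measure_isTrifurcationBox_le (n K : ℕ) (hK : K ≠ 0) :
    (K * K : ℕ) * percolation μ {a | IsTrifurcationBox n (openEdges a)} ≤
      (8 * ((2 * n + 2) * K) : ℕ) := by
  let A (t : ℕ × ℕ) : Set (Edge → Bool) :=
    {a | IsTrifurcationBox n ((boxTranslation n t).edge ⁻¹' openEdges a)}
  have hA (t) : MeasurePreserving (fun (a : Edge → Bool) e => a ((boxTranslation n t).edge e))
      (percolation μ) (percolation μ) :=
    measurePreserving_comp_infinitePi _ (boxTranslation n t).edge.injective fun _ => rfl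
  have h_meas := measurableSet_isTrifurcationBox n
  have hA' (t) : percolation μ (A t) = percolation μ {a | IsTrifurcationBox n (openEdges a)} :=
    (hA t).measure_preimage h_meas.nullMeasurableSet
  calc _ = ∑ t ∈ Finset.range K ×ˢ Finset.range K, percolation μ (A t) := by
        rw [Finset.sum_congr rfl fun t _ => hA' t, Finset.sum_const, Finset.card_product,
          Finset.card_range, nsmul_eq_mul]
    _ ≤ _ := by
        refine sum_measure_le_of_card_le _ (fun t => (hA t).measurable h_meas) fun a T hT ha => ?_
        rw [← Int.card_box (by positivity)]
        refine card_le_card_of_isTrifurcation (G := openGraph (openEdges a)) (fun t ht =>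
          isTrifurcation_of_hasThreeArms (boxTranslation n t) (ha t ht).1 (ha t ht).2 fun v hv _ =>
            exists_reachable_box (boxTranslation_vertex_mem_dualBox hv ?_ ?_))
          fun s _ t _ hst => disjoint_openGraph (disjoint_boxTranslation n hst)
        · exact Finset.mem_range.1 (Finset.mem_product.1 (hT ht)).1
        · exact Finset.mem_range.1 (Finset.mem_product.1 (hT ht)).2

theorem ae_finite_cluster_of_le (hle : μ {true} ≤ μ {false}) :
    ∀ᵐ a ∂percolation μ, ∀ v, (cluster (openEdges a) v).Finite := by
  refine (ae_finite_cluster_or_ae_exists_infinite_cluster μ).resolve_right fun h => ?_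
  have hμ : μ {true} ≠ 0 := by
    intro h_zero
    have h_closed : ∀ᵐ a ∂percolation μ, ∀ e, a e = false := by
      refine ae_all_iff.2 fun e => ?_
      have h_false : ∀ᵐ b ∂μ, b = false := by simpa [ae_iff] using h_zero
      exact (measurePreserving_eval_infinitePi (fun _ => μ) e).quasiMeasurePreserving.ae h_false
    obtain ⟨a, ha, v, hv⟩ := (h_closed.and h).exists
    obtain ⟨e, he, -⟩ := exists_ends_of_infinite_cluster hv
    exact absurd he (by simp [openEdges, ha])
  obtain ⟨n, hn⟩ := exists_measure_hasThreeArms_ne_zero μ hle h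
  have h_pos := measure_isTrifurcationBox_ne_zero μ hμ hn
  obtain ⟨K, hK⟩ := ENNReal.exists_nat_mul_gt h_pos (ENNReal.natCast_ne_top (8 * (2 * n + 2)))
  have hK₀ : K ≠ 0 := by
    rintro rfl
    simp at hK
  refine (card_mul_measure_isTrifurcationBox_le μ n K hK₀).not_gt ?_
  calc ((8 * ((2 * n + 2) * K) : ℕ) : ℝ≥0∞) = K * (8 * (2 * n + 2) : ℕ) := by push_cast; ring
    _ < K * (K * percolation μ {a | IsTrifurcationBox n (openEdges a)}) :=
        ENNReal.mul_lt_mul_right (by simpa) (by simp) hK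
    _ = _ := by push_cast; ring

end Harris

section Sampling

lemma boolOf_eq_true {P : Prop} : boolOf P = true ↔ P := by simp [boolOf]

lemma measurable_boolOf {α : Type*} [MeasurableSpace α] {P : α → Prop}
    (h : MeasurableSet {x | P x}) : Measurable fun x => boolOf (P x) :=
  measurable_to_bool (by simpa only [Set.preimage, Set.mem_singleton_iff, boolOf_eq_true] using h)

instance : IsProbabilityMeasure base := ⟨by simp [base]⟩

/-- The law of a fair coin. -/
noncomputable abbrev fairCoin : Measure Bool := ProbabilityTheory.uniformOn Set.univ

lemma fairCoin_singleton (b : Bool) : fairCoin {b} = 2⁻¹ := by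
  simp [ProbabilityTheory.uniformOn_univ]

lemma measurable_bit (n : ℕ) : Measurable (bit n) := by
  have h_floor : Measurable fun x : ℝ => ⌊x * 2 ^ (n + 1)⌋ := by fun_prop
  exact measurable_boolOf (h_floor (measurableSet_eq_fun (f := fun k : ℤ => k % 2)
    (.of_discrete) measurable_const))

lemma base_eq_restrict_Ico : base = volume.restrict (Set.Ico 0 1) :=
  Measure.restrict_congr_set Ico_ae_eq_Ioc.symm

lemma exists_forall_bit_eq_iff (b : ℕ → Bool) (N : ℕ) :
    ∃ k : ℕ, k < 2 ^ N ∧ ∀ x ∈ Set.Ico (0 : ℝ) 1,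
      (∀ i < N, bit i x = b i) ↔ ⌊x * 2 ^ N⌋ = k := by
  induction N with
  | zero => exact ⟨0, by simp, fun x hx => by simpa [Int.floor_eq_zero_iff] using hx⟩
  | succ N ih =>
    obtain ⟨k, hk, h⟩ := ih
    refine ⟨2 * k + (b N).toNat, ?_, fun x hx => ?_⟩
    · have := (b N).toNat_le
      lia
    · have h_div : ⌊x * 2 ^ N⌋ = ⌊x * 2 ^ (N + 1)⌋ / 2 := by
        simpa [pow_succ, ← mul_assoc] using
          (Int.mul_natCast_floor_div_cancel two_ne_zero (x * 2 ^ N)).symm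
      rw [Nat.forall_lt_succ_right, h x hx, h_div, Bool.eq_iff_iff, bit, boolOf_eq_true]
      cases b N <;> simp <;> lia

lemma base_setOf_floor_eq {N k : ℕ} (hk : k < 2 ^ N) :
    base {x | ⌊x * 2 ^ N⌋ = k} = 2⁻¹ ^ N := by
  have h_pos : (0 : ℝ) < 2 ^ N := by positivity
  have h_eq : {x : ℝ | ⌊x * 2 ^ N⌋ = k} = Set.Ico (k / 2 ^ N : ℝ) ((k + 1) / 2 ^ N) := by
    ext x
    simp [Int.floor_eq_iff, div_le_iff₀ h_pos, lt_div_iff₀ h_pos]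
  have h_subset : Set.Ico (k / 2 ^ N : ℝ) ((k + 1) / 2 ^ N) ⊆ Set.Ico 0 1 :=
    Set.Ico_subset_Ico (by positivity) ((div_le_one h_pos).2 (by exact_mod_cast hk))
  rw [h_eq, base_eq_restrict_Ico, Measure.restrict_apply measurableSet_Ico,
    Set.inter_eq_left.2 h_subset, Real.volume_Ico, ← sub_div, add_sub_cancel_left, one_div,
    ← inv_pow, ENNReal.ofReal_pow (by norm_num), ENNReal.ofReal_inv_of_pos two_pos,
    ENNReal.ofReal_ofNat]

/-- The sequence of all binary digits of a real number. -/
noncomputable def bits (x : ℝ) (n : ℕ) : Bool := bit n x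

lemma measurable_bits : Measurable bits := measurable_pi_lambda _ measurable_bit

lemma base_setOf_forall_bit_eq (b : ℕ → Bool) (N : ℕ) :
    base {x | ∀ i < N, bit i x = b i} = 2⁻¹ ^ N := by
  obtain ⟨k, hk, h⟩ := exists_forall_bit_eq_iff b N
  rw [← base_setOf_floor_eq hk, base_eq_restrict_Ico]
  exact measure_congr <| (ae_restrict_mem measurableSet_Ico).mono fun x hx => propext (h x hx)

lemma measurePreserving_bits : MeasurePreserving bits base (.infinitePi fun _ => fairCoin) := by
  refine ⟨measurable_bits, ((Measure.isProjectiveLimit_infinitePi _).unique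
    ((isProjectiveLimit_nat_iff (isProjectiveMeasureFamily_pi _) _).2 fun n =>
      Measure.ext_of_singleton fun s => ?_)).symm⟩
  have h_eq : bits ⁻¹' (Preorder.frestrictLe n ⁻¹' {s}) =
      {x | ∀ i < n + 1, bit i x = if h : i ≤ n then s ⟨i, Finset.mem_Iic.2 h⟩ else false} := by
    ext x
    simp +contextual [funext_iff, bits]
  rw [Measure.map_apply (Preorder.measurable_frestrictLe n) (measurableSet_singleton s),
    Measure.map_apply measurable_bits (Preorder.measurable_frestrictLe n
      (measurableSet_singleton s)), h_eq, base_setOf_forall_bit_eq]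
  simp [fairCoin_singleton]

/-- The real number with binary digits `b`. -/
noncomputable def ofBits (b : ℕ → Bool) : ℝ := ∑' k : ℕ, if b k then (2 : ℝ)⁻¹ ^ (k + 1) else 0

lemma measurable_ofBits : Measurable ofBits := by
  refine (continuous_tsum (u := fun k => (2 : ℝ)⁻¹ ^ (k + 1)) (fun k => ?_) ?_ ?_).measurable
  · exact (continuous_of_discreteTopology (f := fun c : Bool => if c then (2 : ℝ)⁻¹ ^ (k + 1)
      else 0)).comp (continuous_apply k)
  · exact (summable_nat_add_iff 1).2 (summable_geometric_of_lt_one (by norm_num) (by norm_num))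
  · intro k b
    split_ifs <;> simp

lemma ofBits_bits {x : ℝ} (hx : x ∈ Set.Ico (0 : ℝ) 1) : ofBits (bits x) = x := by
  refine (tsum_congr fun k => ?_).trans (Real.hasSum_ofDigitsTerm_digits x one_lt_two hx).tsum_eq
  have h_floor : ⌊x * 2 ^ (k + 1)⌋ = (⌊x * 2 ^ (k + 1)⌋₊ : ℤ) :=
    (Int.natCast_floor_eq_floor (mul_nonneg hx.1 (by positivity))).symm
  simp only [bits, bit, h_floor, boolOf_eq_true, Real.ofDigitsTerm, Real.digits]
  norm_cast
  obtain h | h := Nat.mod_two_eq_zero_or_one ⌊x * 2 ^ (k + 1)⌋₊ <;> simp [h]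

lemma map_ofBits : (Measure.infinitePi fun _ => fairCoin).map ofBits = base := by
  rw [← measurePreserving_bits.map_eq, Measure.map_map measurable_ofBits measurable_bits]
  have h_id : ofBits ∘ bits =ᵐ[base] id := by
    rw [base_eq_restrict_Ico]
    exact (ae_restrict_mem measurableSet_Ico).mono fun x => ofBits_bits
  rw [Measure.map_congr h_id, Measure.map_id]

lemma measurePreserving_unif {J : Type*} {idx : J → ℕ} (hidx : idx.Injective) :
    MeasurePreserving (fun x j => unif (idx j) x) base (.infinitePi fun _ : J => base) := by
  let digit (q : J × ℕ) : ℕ := Nat.pair (idx q.1) q.2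
  have h_digit : digit.Injective := fun q q' h =>
    Prod.ext (hidx (Nat.pair_eq_pair.1 h).1) (Nat.pair_eq_pair.1 h).2
  have h_select : MeasurePreserving (fun (b : ℕ → Bool) q => b (digit q))
      (.infinitePi fun _ => fairCoin) (.infinitePi fun _ => fairCoin) :=
    ⟨measurable_pi_lambda _ fun q => measurable_pi_apply _,
      Measure.map_infinitePi_infinitePi_of_inj (P := fun _ => fairCoin) h_digit⟩
  have h_curry : MeasurePreserving (MeasurableEquiv.curry J ℕ Bool)
      (.infinitePi fun _ => fairCoin) (.infinitePi fun _ => .infinitePi fun _ => fairCoin) :=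
    ⟨MeasurableEquiv.measurable _, Measure.infinitePi_map_curry fun _ _ => fairCoin⟩
  have h_ofBits : MeasurePreserving (fun (w : J → ℕ → Bool) j => ofBits (w j))
      (.infinitePi fun _ => .infinitePi fun _ => fairCoin) (.infinitePi fun _ => base) := by
    refine ⟨measurable_pi_lambda _ fun j => measurable_ofBits.comp (measurable_pi_apply j), ?_⟩
    rw [Measure.infinitePi_map_pi _ fun _ => measurable_ofBits]
    simp only [map_ofBits]
  exact h_ofBits.comp (h_curry.comp (h_select.comp measurePreserving_bits))

lemma measurable_threshold (p : ℝ) : Measurable fun x : ℝ => boolOf (x < p) :=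
  measurable_boolOf measurableSet_Iio

/-- The law of a coin showing `true` when a uniform variable falls below the threshold `p`. -/
noncomputable def coin (p : ℝ) : Measure Bool := base.map fun x => boolOf (x < p)

instance (p : ℝ) : IsProbabilityMeasure (coin p) :=
  Measure.isProbabilityMeasure_map (measurable_threshold p).aemeasurable

lemma coin_true_le_coin_false {p : ℝ} (hp : p ≤ 1 / 2) : coin p {true} ≤ coin p {false} := by
  have h_true : coin p {true} ≤ 2⁻¹ := by
    calc coin p {true} = base (Set.Iio p) := by
          rw [coin, Measure.map_apply (measurable_threshold p) (measurableSet_singleton _)]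
          congr
          ext x
          exact boolOf_eq_true
      _ ≤ volume (Set.Ico (0 : ℝ) (1 / 2)) := by
          rw [base_eq_restrict_Ico, Measure.restrict_apply measurableSet_Iio]
          exact measure_mono fun x hx => ⟨hx.2.1, hx.1.trans_le hp⟩
      _ = 2⁻¹ := by
          rw [Real.volume_Ico, sub_zero, one_div, ENNReal.ofReal_inv_of_pos two_pos,
            ENNReal.ofReal_ofNat]
  calc coin p {true} ≤ 2⁻¹ := h_true
    _ = 1 - 2⁻¹ := ENNReal.one_sub_inv_two.symm
    _ ≤ 1 - coin p {true} := tsub_le_tsub_left h_true 1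
    _ = coin p {false} := (measure_false_eq_one_sub _).symm

end Sampling

section Labels

lemma eIdx_comm (u v : V) : eIdx u v = eIdx v u := min_comm _ _

lemma eIdx_of_ends {e : Edge} {u v : V} (h : Ends e u v) : eIdx u v = eIdx (src e) (tgt e) := by
  rcases h with ⟨rfl, rfl⟩ | ⟨rfl, rfl⟩
  exacts [rfl, eIdx_comm _ _]

lemma eq_or_eq_swap_of_eIdx_eq {u v u' v' : V} (h : eIdx u v = eIdx u' v') :
    (u = u' ∧ v = v') ∨ (u = v' ∧ v = u') := by
  have h_choice (a b : V) :
      eIdx a b = Encodable.encode (a, b) ∨ eIdx a b = Encodable.encode (b, a) := min_choice _ _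
  rcases h_choice u v with h₁ | h₁ <;> rcases h_choice u' v' with h₂ | h₂ <;>
    rw [h₁, h₂, Encodable.encode_inj, Prod.mk.injEq] at h <;> tauto

lemma injective_eIdx_src_tgt : Function.Injective fun e : Edge => eIdx (src e) (tgt e) :=
  fun e _ h => (ends_src_tgt e).edge_eq <| (eq_or_eq_swap_of_eIdx_eq h).imp
    (fun h => ⟨h.1.symm, h.2.symm⟩) fun h => ⟨h.2.symm, h.1.symm⟩

/-- The index of the uniform variable that drives an edge or a vertex. -/
noncomputable def labelIndex : Edge ⊕ V → ℕ
  | .inl e => 2 * eIdx (src e) (tgt e)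
  | .inr v => 2 * Encodable.encode v + 1

lemma injective_labelIndex : labelIndex.Injective := by
  rintro (e | v) (e' | v') h <;> simp only [labelIndex] at h
  · exact congrArg _ (injective_eIdx_src_tgt (by simpa using h))
  · lia
  · lia
  · exact congrArg _ (Encodable.encode_injective (by simpa using h))

/-- The coins thrown at the edges (with threshold `p`) and at the vertices (with threshold `r`). -/
noncomputable def field (p r x : ℝ) (j : Edge ⊕ V) : Bool :=
  boolOf (unif (labelIndex j) x < j.elim (fun _ => p) fun _ => r)

/-- The law of a coin at each edge (with bias `p`) and at each vertex (with bias `r`), all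
independent. -/
noncomputable abbrev fieldMeasure (p r : ℝ) : Measure (Edge ⊕ V → Bool) :=
  .infinitePi fun j => coin (j.elim (fun _ => p) fun _ => r)

lemma measurePreserving_field (p r : ℝ) :
    MeasurePreserving (field p r) base (fieldMeasure p r) := by
  let threshold (j : Edge ⊕ V) : ℝ := j.elim (fun _ => p) fun _ => r
  have h_threshold : MeasurePreserving (fun (y : Edge ⊕ V → ℝ) j => boolOf (y j < threshold j))
      (.infinitePi fun _ => base) (fieldMeasure p r) :=
    ⟨measurable_pi_lambda _ fun j => (measurable_threshold _).comp (measurable_pi_apply j),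
      Measure.infinitePi_map_pi _ fun j => measurable_threshold (threshold j)⟩
  exact h_threshold.comp (measurePreserving_unif injective_labelIndex)

end Labels

section Product

lemma measurePreserving_sumPiEquivProdPi {I J : Type*} {X : I ⊕ J → Type*}
    [∀ i, MeasurableSpace (X i)] (m : ∀ i, Measure (X i)) [∀ i, IsProbabilityMeasure (m i)] :
    MeasurePreserving (MeasurableEquiv.sumPiEquivProdPi X) (.infinitePi m)
      ((Measure.infinitePi fun i => m (.inl i)).prod (.infinitePi fun j => m (.inr j))) := by
  refine MeasurePreserving.symm (MeasurableEquiv.sumPiEquivProdPi X).symm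
    ⟨MeasurableEquiv.measurable _, Measure.eq_infinitePi _ fun S t ht => ?_⟩
  have h_preimage : (MeasurableEquiv.sumPiEquivProdPi X).symm ⁻¹' Set.pi S t =
      (Set.pi S.toLeft fun i => t (.inl i)) ×ˢ (Set.pi S.toRight fun j => t (.inr j)) := by
    ext z
    simp [Set.mem_pi, MeasurableEquiv.sumPiEquivProdPi]
  rw [MeasurableEquiv.map_apply, h_preimage, Measure.prod_prod,
    Measure.infinitePi_pi _ fun _ _ => ht _, Measure.infinitePi_pi _ fun _ _ => ht _]
  conv_rhs => rw [← Finset.toLeft_disjSum_toRight (u := S), Finset.prod_disjSum]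

lemma map_comp_infinitePi_of_factor {I Q X : Type*} [MeasurableSpace X] (m : Measure X)
    [IsProbabilityMeasure m] {q : I → Q} (hq : q.Surjective) {ρ : I → I}
    (h_mem : ∀ i, q (ρ i) = q i) (h_const : ∀ i j, q i = q j → ρ i = ρ j) :
    (Measure.infinitePi fun _ : I => m).map (fun c i => c (ρ i)) =
      (Measure.infinitePi fun _ : Q => m).map fun c i => c (q i) := by
  let rep (k : Q) : I := ρ (Function.surjInv hq k)
  have h_inj : rep.Injective :=
    Function.LeftInverse.injective (g := q) fun k => (h_mem _).trans (Function.surjInv_eq hq k)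
  have h_rep (i : I) : rep (q i) = ρ i := h_const _ _ (Function.surjInv_eq hq (q i))
  simp only [← h_rep]
  rw [← Measure.map_infinitePi_infinitePi_of_inj (P := fun _ : I => m) h_inj]
  exact (Measure.map_map (measurable_pi_lambda _ fun i => measurable_pi_apply (q i))
    (measurable_pi_lambda _ fun k => measurable_pi_apply (rep k))).symm

end Product

section MinVertex

variable {α : Type*} [LinearOrder α] {f : V → α} {O : Set Edge} {u v w : V}

/-- `w` is a vertex of the cluster of `v` at which `f` is minimal. -/
def IsMinVertex (f : V → α) (O : Set Edge) (v w : V) : Prop :=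
  w ∈ cluster O v ∧ IsMinOn f (cluster O v) w

lemma IsMinVertex.unique (hf : f.Injective) {w' : V} (h : IsMinVertex f O v w)
    (h' : IsMinVertex f O v w') : w = w' :=
  hf (le_antisymm (h.2 h'.1) (h'.2 h.1))

open Classical in
/-- The representative of the cluster of `v` for the order that `f` induces on the vertices. When
there is no minimal vertex, the default `v` keeps the construction translation-equivariant. -/
noncomputable def minVertex (f : V → α) (O : Set Edge) (v : V) : V :=
  if h : ∃ w, IsMinVertex f O v w then h.choose else v

lemma isMinVertex_minVertex (h : ∃ w, IsMinVertex f O v w) :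
    IsMinVertex f O v (minVertex f O v) := by
  rw [minVertex, dif_pos h]
  exact h.choose_spec

lemma minVertex_of_not_exists (h : ¬ ∃ w, IsMinVertex f O v w) : minVertex f O v = v := dif_neg h

lemma IsMinVertex.minVertex_eq (hf : f.Injective) (h : IsMinVertex f O v w) :
    minVertex f O v = w :=
  (isMinVertex_minVertex ⟨w, h⟩).unique hf h

lemma exists_isMinVertex_of_finite (f : V → α) (h : (cluster O v).Finite) :
    ∃ w, IsMinVertex f O v w :=
  Set.exists_min_image _ f h ⟨v, .refl v⟩

lemma minVertex_eq_of_reachable (hf : f.Injective) (hv : (cluster O v).Finite)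
    (h : (openGraph O).Reachable u v) : minVertex f O u = minVertex f O v := by
  have h_cluster : cluster O u = cluster O v := Set.ext fun w => ⟨h.symm.trans, h.trans⟩
  refine IsMinVertex.minVertex_eq hf ?_
  rw [IsMinVertex, h_cluster]
  exact isMinVertex_minVertex (exists_isMinVertex_of_finite f hv)

lemma minVertex_vertex (hf : f.Injective) (g : LatticeAut)
    (hg : ∀ x y, f (g.vertex x) ≤ f (g.vertex y) ↔ f x ≤ f y) :
    minVertex f O (g.vertex v) = g.vertex (minVertex f (g.edge ⁻¹' O) v) := by
  have h_iff (w : V) :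
      IsMinVertex f O (g.vertex v) (g.vertex w) ↔ IsMinVertex f (g.edge ⁻¹' O) v w := by
    refine and_congr g.reachable_iff ⟨fun h x hx => (hg w x).1 (h (g.reachable_iff.2 hx)), ?_⟩
    intro h x hx
    obtain ⟨x, rfl⟩ := g.vertex.surjective x
    exact (hg w x).2 (h (g.reachable_iff.1 hx))
  by_cases h : ∃ w, IsMinVertex f (g.edge ⁻¹' O) v w
  · exact ((h_iff _).2 (isMinVertex_minVertex h)).minVertex_eq hf
  · rw [minVertex_of_not_exists h, minVertex_of_not_exists]
    rintro ⟨w, hw⟩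
    obtain ⟨w, rfl⟩ := g.vertex.surjective w
    exact h ⟨w, (h_iff w).1 hw⟩

lemma measurable_isMinVertex (f : V → α) (v w : V) :
    Measurable fun a => IsMinVertex f (openEdges a) v w := by
  have h_reachable (x : V) : Measurable fun a => x ∈ cluster (openEdges a) v :=
    measurableSet_setOfPred.1 (by simpa [cluster] using (isOpen_reachable ∅ v x).measurableSet)
  simp only [IsMinVertex, isMinOn_iff]
  exact (h_reachable w).and (.forall fun x => (h_reachable x).imp measurable_const)

lemma measurable_minVertex (hf : f.Injective) (v : V) :
    Measurable fun a => minVertex f (openEdges a) v := by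
  refine measurable_to_countable' fun w => ?_
  have h_eq : (fun a => minVertex f (openEdges a) v) ⁻¹' {w} =
      {a | IsMinVertex f (openEdges a) v w ∨
        (¬ ∃ w, IsMinVertex f (openEdges a) v w) ∧ v = w} := by
    ext a
    rw [Set.mem_preimage, Set.mem_singleton_iff, Set.mem_ofPred_eq]
    by_cases h : ∃ w, IsMinVertex f (openEdges a) v w
    · simp only [h, not_true_eq_false, false_and, or_false]
      exact ⟨fun hw => hw ▸ isMinVertex_minVertex h, fun hw => hw.minVertex_eq hf⟩
    · rw [minVertex_of_not_exists h]
      simp [h, not_exists.1 h w]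
  rw [h_eq, measurableSet_setOfPred]
  exact (measurable_isMinVertex f v w).or
    ((Measurable.exists fun w => measurable_isMinVertex f v w).not.and measurable_const)

end MinVertex

section DivideAndColour

/-- The edge configuration in which the state of the edge `e` is `a e`. -/
noncomputable def edgeState (a : Edge → Bool) : EdgeCfg :=
  fun u v => boolOf ((openGraph (openEdges a)).Adj u v)

lemma sq_add_sq_eq_one_iff {x y : ℤ} :
    x ^ 2 + y ^ 2 = 1 ↔ (y = 0 ∧ (x = 1 ∨ x = -1)) ∨ (x = 0 ∧ (y = 1 ∨ y = -1)) := by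
  refine ⟨fun h => ?_, by rintro (⟨rfl, rfl | rfl⟩ | ⟨rfl, rfl | rfl⟩) <;> rfl⟩
  have hx : |x| ≤ 1 := (sq_le_one_iff_abs_le_one _).1 (by nlinarith [sq_nonneg y])
  have hy : |y| ≤ 1 := (sq_le_one_iff_abs_le_one _).1 (by nlinarith [sq_nonneg x])
  rw [abs_le] at hx hy
  obtain ⟨hx₀, hx₁⟩ := hx
  obtain ⟨hy₀, hy₁⟩ := hy
  interval_cases x <;> interval_cases y <;> simp_all

lemma sqAdj_iff_exists_ends (u v : V) : SqAdj u v ↔ ∃ e, Ends e u v := by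
  obtain ⟨i, j⟩ := u
  obtain ⟨k, l⟩ := v
  rw [SqAdj, sq_add_sq_eq_one_iff]
  constructor
  · rintro (⟨h, h' | h'⟩ | ⟨h, h' | h'⟩)
    · exact ⟨((k, l), false), by simp [Ends, src, tgt]; lia⟩
    · exact ⟨((i, j), false), by simp [Ends, src, tgt]; lia⟩
    · exact ⟨((k, l), true), by simp [Ends, src, tgt]; lia⟩
    · exact ⟨((i, j), true), by simp [Ends, src, tgt]; lia⟩
  · rintro ⟨⟨⟨x, y⟩, _ | _⟩, h⟩ <;>
      simp only [Ends, src_mk, tgt_true, tgt_false, Prod.mk.injEq] at h <;> lia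

lemma edgeCfg_sqAdj (p r x : ℝ) :
    edgeCfg SqAdj p x = edgeState fun e => field p r x (.inl e) := by
  funext u v
  rw [Bool.eq_iff_iff]
  simp only [edgeCfg, edgeState, Bool.and_eq_true, boolOf_eq_true, field, sqAdj_iff_exists_ends]
  constructor
  · rintro ⟨⟨e, he⟩, h⟩
    refine ⟨e, boolOf_eq_true.2 ?_, he⟩
    rwa [edgeU, eIdx_of_ends he] at h
  · rintro ⟨e, h, he⟩
    refine ⟨⟨e, he⟩, ?_⟩
    rw [edgeU, eIdx_of_ends he]
    exact boolOf_eq_true.1 h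

lemma pCluster_edgeState (a : Edge → Bool) (v : V) :
    pCluster (edgeState a) v = cluster (openEdges a) v := by
  ext w
  simp only [pCluster, Conn, cluster, edgeState, boolOf_eq_true, Set.mem_ofPred_eq,
    SimpleGraph.reachable_iff_reflTransGen]

lemma clusterRep_edgeState (a : Edge → Bool) (v : V) :
    clusterRep (edgeState a) v = minVertex (Encodable.encode : V → ℕ) (openEdges a) v := by
  have h_nonempty : (Encodable.encode '' cluster (openEdges a) v).Nonempty :=
    ⟨_, v, .refl v, rfl⟩
  obtain ⟨w, hw, h_sInf⟩ := Nat.sInf_mem h_nonempty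
  rw [clusterRep, pCluster_edgeState, ← h_sInf, Encodable.encodek, Option.getD_some]
  refine (IsMinVertex.minVertex_eq Encodable.encode_injective ⟨hw, fun w' hw' => ?_⟩).symm
  rw [Set.mem_ofPred_eq, h_sInf]
  exact Nat.sInf_le ⟨w', hw', rfl⟩

variable {α : Type*} [LinearOrder α] {f : V → α}

/-- The DaC configuration with edge states `z.1` in which each cluster receives the colour that
`z.2` assigns to its minimal vertex with respect to `f`. -/
noncomputable def divideAndColour (f : V → α) (z : (Edge → Bool) × (V → Bool)) : Config :=
  (edgeState z.1, fun v => z.2 (minVertex f (openEdges z.1) v))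

lemma measurable_edgeState : Measurable edgeState := by
  refine measurable_pi_lambda _ fun u => measurable_pi_lambda _ fun v => measurable_boolOf ?_
  have h_open (e : Edge) : Measurable fun a => e ∈ openEdges a :=
    measurableSet_setOfPred.1 (measurableSet_eq_fun (measurable_pi_apply e) measurable_const)
  exact measurableSet_setOfPred.2 (.exists fun e => (h_open e).and measurable_const)

lemma measurable_divideAndColour (hf : f.Injective) : Measurable (divideAndColour f) := by
  refine (measurable_edgeState.comp measurable_fst).prodMk (measurable_pi_lambda _ fun v => ?_)
  have h_eval : Measurable fun z : V × (V → Bool) => z.2 z.1 :=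
    measurable_from_prod_countable_right fun u => measurable_pi_apply u
  exact h_eval.comp (((measurable_minVertex hf v).comp measurable_fst).prodMk measurable_snd)

lemma map_comp_minVertex {O : Set Edge} (ν : Measure Bool) [IsProbabilityMeasure ν]
    (hf : f.Injective) (hO : ∀ v, (cluster O v).Finite) :
    (Measure.infinitePi fun _ : V => ν).map (fun c v => c (minVertex f O v)) =
      (Measure.infinitePi fun _ => ν).map
        fun c v => c ((openGraph O).connectedComponentMk v) := by
  refine map_comp_infinitePi_of_factor ν Quot.mk_surjective (fun v => ?_) fun u v h => ?_
  · exact (SimpleGraph.ConnectedComponent.sound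
      (isMinVertex_minVertex (exists_isMinVertex_of_finite f (hO v))).1).symm
  · exact minVertex_eq_of_reachable hf (hO v) (SimpleGraph.ConnectedComponent.exact h)

lemma map_divideAndColour_eq {β : Type*} [LinearOrder β] {g : V → β} (hf : f.Injective)
    (hg : g.Injective) (μ ν : Measure Bool) [IsProbabilityMeasure μ] [IsProbabilityMeasure ν]
    (hμ : μ {true} ≤ μ {false}) :
    ((percolation μ).prod (Measure.infinitePi fun _ : V => ν)).map (divideAndColour f) =
      ((percolation μ).prod (Measure.infinitePi fun _ : V => ν)).map (divideAndColour g) := by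
  ext B hB
  rw [Measure.map_apply (measurable_divideAndColour hf) hB,
    Measure.map_apply (measurable_divideAndColour hg) hB,
    Measure.prod_apply (measurable_divideAndColour hf hB),
    Measure.prod_apply (measurable_divideAndColour hg hB)]
  refine lintegral_congr_ae ?_
  filter_upwards [ae_finite_cluster_of_le μ hμ] with a ha
  have h_section : MeasurableSet {c | (edgeState a, c) ∈ B} := measurable_prodMk_left hB
  have h_law := (map_comp_minVertex ν hf ha).trans (map_comp_minVertex ν hg ha).symm
  have h_apply (ρ : V → V) := Measure.map_apply (μ := .infinitePi fun _ : V => ν)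
    (measurable_pi_lambda (fun c v => c (ρ v)) fun v => measurable_pi_apply _) h_section
  exact (h_apply _).symm.trans ((DFunLike.congr_fun h_law _).trans (h_apply _))

lemma measurePreserving_divideAndColour (hf : f.Injective) {p : ℝ} (hp : p ≤ 1 / 2) (r : ℝ) :
    MeasurePreserving (fun w => divideAndColour f (MeasurableEquiv.sumPiEquivProdPi _ w))
      (fieldMeasure p r) (DaCMeasure SqAdj p r) := by
  let encode : V → ℕ := Encodable.encode
  have h_encode : encode.Injective := Encodable.encode_injective
  have h_sample : (fun x => (edgeCfg SqAdj p x, colourCfg SqAdj p r x)) =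
      divideAndColour encode ∘ MeasurableEquiv.sumPiEquivProdPi _ ∘ field p r := by
    funext x
    refine Prod.ext (edgeCfg_sqAdj p r x) (funext fun v => ?_)
    simp only [colourCfg, edgeCfg_sqAdj p r, clusterRep_edgeState]
    rfl
  have h_split := measurePreserving_sumPiEquivProdPi
    fun j : Edge ⊕ V => coin (j.elim (fun _ => p) fun _ => r)
  refine ⟨(measurable_divideAndColour hf).comp h_split.measurable, ?_⟩
  rw [DaCMeasure, h_sample,
    ← Measure.map_map (measurable_divideAndColour h_encode)
      (h_split.comp (measurePreserving_field p r)).measurable,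
    (h_split.comp (measurePreserving_field p r)).map_eq]
  refine Eq.trans ?_ (map_divideAndColour_eq hf h_encode (coin p) (coin r)
    (coin_true_le_coin_false hp))
  exact (((measurable_divideAndColour hf).measurePreserving _).comp h_split).map_eq

end DivideAndColour

section Ergodicity

/-- The translation by `u` on edges and vertices together. -/
def translate (u : V) : Edge ⊕ V → Edge ⊕ V := Sum.map (translation u).edge (translation u).vertex

lemma injective_translate (u : V) : (translate u).Injective :=
  (translation u).edge.injective.sumMap (translation u).vertex.injective

lemma notMem_periodicPts_translate {u : V} (hu : u ≠ 0) (j : Edge ⊕ V) :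
    j ∉ (translate u).periodicPts := by
  rintro ⟨n, hn, h⟩
  let position : Edge ⊕ V → V := Sum.elim src id
  have h_semiconj : Function.Semiconj position (translate u) (· + u) := by
    rintro (e | v) <;> rfl
  have h_fix := h_semiconj.iterate_right n j
  rw [h, add_right_iterate_apply, left_eq_add, smul_eq_zero] at h_fix
  exact h_fix.elim hn.ne' hu

lemma toLex_add_le_toLex_add (u x y : V) :
    (toLex (x + u) : ℤ ×ₗ ℤ) ≤ toLex (y + u) ↔ (toLex x : ℤ ×ₗ ℤ) ≤ toLex y := by
  simp only [Prod.Lex.toLex_le_toLex, Prod.fst_add, Prod.snd_add]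
  lia

lemma shift_divideAndColour (u : V) (w : Edge ⊕ V → Bool) :
    shift u (divideAndColour (toLex : V → ℤ ×ₗ ℤ) (MeasurableEquiv.sumPiEquivProdPi _ w)) =
      divideAndColour (toLex : V → ℤ ×ₗ ℤ)
        (MeasurableEquiv.sumPiEquivProdPi _ fun j => w (translate u j)) := by
  refine Prod.ext ?_ ?_
  · exact funext₂ fun x y => Bool.eq_iff_iff.2 <|
      boolOf_eq_true.trans <| ((translation u).openGraphIso _).map_adj_iff.trans
        boolOf_eq_true.symm
  · exact funext fun v => congrArg (fun v => w (.inr v))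
      (minVertex_vertex toLex.injective (translation u) (toLex_add_le_toLex_add u))

lemma measurable_shift (u : V) : Measurable (shift u) := by
  unfold shift
  fun_prop

theorem ergodic_translations_general {p : ℝ} (hp : p ≤ 1 / 2) (r : ℝ) {u : V} (hu : u ≠ 0) :
    Ergodic (shift u) (DaCMeasure SqAdj p r) :=
  (measurePreserving_divideAndColour toLex.injective hp r).ergodic_of_ergodic_semiconj
    (ergodic_comp_infinitePi _ (injective_translate u) (by rintro (e | v) <;> rfl)
      (notMem_periodicPts_translate hu))
    (measurable_shift u) fun w => (shift_divideAndColour u w).symm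

end Ergodicity

/-- **Ergodicity.** For `p < 1/2`, the DaC measure is invariant under the
translations by `(1,0)` and `(0,1)`, and each of these translations is an
ergodic measure-preserving transformation: every measurable invariant event
has probability `0` or `1`. -/
theorem ergodic_translations (p r : ℝ) (hp0 : 0 ≤ p) (hp : p < 1 / 2)
    (hr0 : 0 ≤ r) (hr1 : r ≤ 1) :
    (MeasureTheory.MeasurePreserving (shift ((1 : ℤ), (0 : ℤ)))
        (DaCMeasure SqAdj p r) (DaCMeasure SqAdj p r) ∧
      ∀ A : Set Config, MeasurableSet A → shift ((1 : ℤ), (0 : ℤ)) ⁻¹' A = A →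
        DaCMeasure SqAdj p r A = 0 ∨ DaCMeasure SqAdj p r A = 1) ∧
    (MeasureTheory.MeasurePreserving (shift ((0 : ℤ), (1 : ℤ)))
        (DaCMeasure SqAdj p r) (DaCMeasure SqAdj p r) ∧
      ∀ A : Set Config, MeasurableSet A → shift ((0 : ℤ), (1 : ℤ)) ⁻¹' A = A →
        DaCMeasure SqAdj p r A = 0 ∨ DaCMeasure SqAdj p r A = 1) := by
  have : IsProbabilityMeasure (DaCMeasure SqAdj p r) := by
    have h := measurePreserving_divideAndColour Encodable.encode_injective hp.le r
    exact h.map_eq ▸ Measure.isProbabilityMeasure_map h.aemeasurable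
  have h_ergodic {u : V} (hu : u ≠ 0) := ergodic_translations_general hp.le r hu
  exact ⟨⟨(h_ergodic (by simp)).toMeasurePreserving,
      fun _ hA h => (h_ergodic (by simp)).prob_eq_zero_or_one hA h⟩,
    (h_ergodic (by simp)).toMeasurePreserving,
      fun _ hA h => (h_ergodic (by simp)).prob_eq_zero_or_one hA h⟩

end DaC
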